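/- arXiv:1311.7049 — 2 statements merged into one kernel-verified Lean document; each statement's English description precedes it below -/
import Mathlib

section
/- Let X be a strictly stable random variable with parameters (ν, θ, τ). Then sign X and log|X| are integrable and E[sign X] = θ and E[log|X|] = τ. -/
open MeasureTheory ProbabilityTheory

/-- The real value of the Riemann zeta function at a real argument. -/
noncomputable def zetaR (s : ℝ) : ℝ := (riemannZeta (s : ℂ)).re

/-- A real random variable `X` is strictly stable with parameters `(ν, θ, τ)` if
`ν ≥ 1/4`, `|θ| ≤ min 1 (2√ν − 1)`, `P(X = 0) = 0`, `log |X|` has finite absolute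
moments of every order, and the characteristic function of `X` is
`E[exp(i k X)] = exp(−exp(ν^{−1/2}(log|k| + τ − i(π/2)θ sign k) + C(ν^{−1/2} − 1)))`
for all real `k ≠ 0`, where `C` is the Euler–Mascheroni constant. -/
def IsStrictlyStable {Ω : Type*} [MeasureSpace Ω] (X : Ω → ℝ) (ν θ τ : ℝ) : Prop :=
  Measurable X ∧ (1/4 : ℝ) ≤ ν ∧ |θ| ≤ min 1 (2 * Real.sqrt ν - 1) ∧
  (ℙ : Measure Ω) {ω | X ω = 0} = 0 ∧
  (∀ p : ℕ, Integrable (fun ω => (abs (Real.log (abs (X ω)))) ^ p)) ∧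
  ∀ k : ℝ, k ≠ 0 →
    (∫ ω, Complex.exp (Complex.I * (k : ℂ) * (X ω : ℂ))) =
      Complex.exp (-Complex.exp
        (((ν ^ (-(1/2) : ℝ) : ℝ) : ℂ) *
            (((Real.log |k| : ℝ) : ℂ) + (τ : ℂ) -
              Complex.I * ((Real.pi / 2 : ℝ) : ℂ) * (θ : ℂ) * ((Real.sign k : ℝ) : ℂ)) +
          ((Real.eulerMascheroniConstant : ℝ) : ℂ) * (((ν ^ (-(1/2) : ℝ) : ℝ) : ℂ) - 1)))

/-!
On the half-line `t > 0` the characteristic function of `X` is `φ t = exp (-(w * t ^ α))`. Since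
`(s - I * X) ^ (-s) * Γ s` is the Laplace–Mellin integral of `t ^ (s - 1) * exp (-s * t)` against
`exp (I * t * X)`, Fubini gives
`E[(s - I * X) ^ (-s)] * Γ s = ∫ t in (0, ∞), t ^ (s - 1) * exp (-s * t) * φ t`.
Subtract `Γ s` and let `s → 0+`: the left-hand side tends to `-E[log (-I * X)]`, the right-hand
side, computed by the substitution `u = t ^ α`, to `C - (log w + C) / α` with `C` the
Euler–Mascheroni constant. Hence `E[log (-I * X)] = (log w + C) / α - C = τ - I * (π / 2) * θ`, and
since `log (-I * x) = log |x| - I * (π / 2) * sign x`, it remains to compare real and imaginary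
parts.

Damping by `exp (-s * t)`, with the Mellin exponent itself as rate, keeps everything integrable, and
because `s ^ (-s)` is bounded near `0` a first logarithmic moment suffices to dominate the left-hand
side. If `re w = 0`, which forces `α = 1`, the undamped Mellin integral of `φ` no longer converges
absolutely, but then `X` is almost surely constant.
-/

open Set Filter Topology
open Complex (I)
open Real (eulerMascheroniConstant)
open scoped Real

section LaplaceMellin

lemma integrableOn_rpow_mul_exp_neg_mul {s r : ℝ} (hs : 0 < s) (hr : 0 < r) :
    IntegrableOn (fun t : ℝ => t ^ (s - 1) * Real.exp (-(r * t))) (Ioi 0) := by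
  simpa using integrableOn_rpow_mul_exp_neg_mul_rpow (s := s - 1) (by linarith) one_pos hr

lemma differentiableOn_integral_mul_cexp_neg_mul {g : ℝ → ℝ} (hg : Measurable g)
    (hg0 : ∀ t ∈ Ioi 0, 0 ≤ g t)
    (hint : ∀ r > 0, IntegrableOn (fun t => g t * Real.exp (-(r * t))) (Ioi 0)) :
    DifferentiableOn ℂ (fun z : ℂ => ∫ t in Ioi 0, (g t : ℂ) * Complex.exp (-(z * t)))
      {z | 0 < z.re} := by
  let μ : Measure ℝ := (volume.restrict (Ioi 0)).withDensity fun t => ENNReal.ofReal (g t)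
  have hfin : ∀ᵐ t ∂volume.restrict (Ioi (0 : ℝ)), ENNReal.ofReal (g t) < ⊤ :=
    Eventually.of_forall fun _ => ENNReal.ofReal_lt_top
  have hsub : Ioi 0 ⊆ interior (integrableExpSet (fun t => -t) μ) := by
    refine interior_maximal (fun r hr => ?_) isOpen_Ioi
    refine (integrable_withDensity_iff hg.ennreal_ofReal hfin).2
      ((hint r hr).congr_fun (fun t ht => ?_) measurableSet_Ioi)
    simp only [ENNReal.toReal_ofReal (hg0 t ht), mul_neg, mul_comm]
  have hmgf (z : ℂ) : complexMGF (fun t => -t) μ z =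
      ∫ t in Ioi 0, (g t : ℂ) * Complex.exp (-(z * t)) := by
    rw [complexMGF, integral_withDensity_eq_integral_toReal_smul hg.ennreal_ofReal hfin]
    refine setIntegral_congr_fun measurableSet_Ioi fun t ht => ?_
    simp only [ENNReal.toReal_ofReal (hg0 t ht), Complex.real_smul, Complex.ofReal_neg, mul_neg]
  simp_rw [← hmgf]
  exact differentiableOn_complexMGF.mono fun z hz => hsub hz

lemma integral_rpow_mul_cexp_neg_mul_Ioi {s : ℝ} (hs : 0 < s) {z : ℂ} (hz : 0 < z.re) :
    ∫ t in Ioi (0 : ℝ), ((t ^ (s - 1) : ℝ) : ℂ) * Complex.exp (-(z * t)) =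
      z ^ (-s : ℂ) * Complex.Gamma s := by
  have hopen : IsOpen {z : ℂ | 0 < z.re} := isOpen_lt continuous_const Complex.continuous_re
  have hleft := (differentiableOn_integral_mul_cexp_neg_mul (g := fun t => t ^ (s - 1))
    (by fun_prop) (fun t ht => Real.rpow_nonneg (le_of_lt ht) _)
    fun r hr => integrableOn_rpow_mul_exp_neg_mul hs hr).analyticOnNhd hopen
  have hright : AnalyticOnNhd ℂ (fun z : ℂ => z ^ (-s : ℂ) * Complex.Gamma s) {z | 0 < z.re} :=
    DifferentiableOn.analyticOnNhd (fun z hz =>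
      ((differentiableAt_id.cpow_const (Or.inl hz)).mul_const _).differentiableWithinAt) hopen
  have hreal {r : ℝ} (hr : 0 < r) :
      ∫ t in Ioi (0 : ℝ), ((t ^ (s - 1) : ℝ) : ℂ) * Complex.exp (-((r : ℂ) * t)) =
        (r : ℂ) ^ (-s : ℂ) * Complex.Gamma s := by
    rw [Complex.cpow_neg, ← Complex.inv_cpow _ _ (by simp [Complex.arg_ofReal_of_nonneg hr.le,
      Real.pi_ne_zero.symm]), ← one_div,
      ← Complex.integral_cpow_mul_exp_neg_mul_Ioi (by simpa using hs) hr]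
    refine setIntegral_congr_fun measurableSet_Ioi fun t ht => ?_
    simp only [Complex.ofReal_cpow (le_of_lt ht), Complex.ofReal_sub, Complex.ofReal_one]
  have htendsto : Tendsto (fun r : ℝ => (r : ℂ)) (𝓝[≠] 1) (𝓝[≠] 1) :=
    Complex.continuous_ofReal.continuousWithinAt.tendsto_nhdsWithin (by simp [MapsTo])
  refine hleft.eqOn_of_preconnected_of_frequently_eq hright
    (convex_halfSpace_re_gt 0).isPreconnected (z₀ := 1) (by simp) (htendsto.frequently ?_) hz
  refine Eventually.frequently ?_
  filter_upwards [nhdsWithin_le_nhds (lt_mem_nhds one_pos)] with r hr using hreal hr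

lemma integral_rpow_mul_cexp_neg_mul_rpow_Ioi {s α : ℝ} (hs : 0 < s) (hα : 0 < α) {w : ℂ}
    (hw : 0 < w.re) :
    ∫ t in Ioi (0 : ℝ), ((t ^ (s - 1) : ℝ) : ℂ) * Complex.exp (-(w * (t ^ α : ℝ))) =
      w ^ (-(s / α) : ℂ) * Complex.Gamma (s / α) / α := by
  have hα0 : (α : ℂ) ≠ 0 := mod_cast hα.ne'
  have hlaplace := integral_rpow_mul_cexp_neg_mul_Ioi (div_pos hs hα) hw
  rw [← integral_comp_rpow_Ioi_of_pos hα] at hlaplace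
  push_cast at hlaplace
  rw [← hlaplace, eq_div_iff hα0, ← integral_mul_const]
  refine setIntegral_congr_fun measurableSet_Ioi fun t (ht : 0 < t) => ?_
  have hpow : t ^ (s - 1) = t ^ (α - 1) * (t ^ α) ^ (s / α - 1) := by
    rw [← Real.rpow_mul ht.le, ← Real.rpow_add ht]
    congr 1
    field_simp
    ring
  simp only [hpow, Complex.real_smul]
  push_cast
  ring

lemma norm_cexp_neg_mul_ofReal (w : ℂ) (y : ℝ) :
    ‖Complex.exp (-(w * y))‖ = Real.exp (-w.re * y) := by
  simp [Complex.norm_exp]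

lemma integrableOn_rpow_mul_cexp_neg_mul_rpow {s α : ℝ} (hs : 0 < s) (hα : 0 < α) {w : ℂ}
    (hw : 0 < w.re) :
    IntegrableOn (fun t : ℝ => ((t ^ (s - 1) : ℝ) : ℂ) * Complex.exp (-(w * (t ^ α : ℝ))))
      (Ioi 0) := by
  refine (integrableOn_rpow_mul_exp_neg_mul_rpow (by linarith : -1 < s - 1) hα hw).mono'
    (Measurable.aestronglyMeasurable (by fun_prop)) ?_
  filter_upwards [ae_restrict_mem measurableSet_Ioi] with t ht
  rw [norm_mul, norm_cexp_neg_mul_ofReal, Complex.norm_real,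
    Real.norm_of_nonneg (Real.rpow_nonneg (le_of_lt ht) _)]

lemma hasDerivAt_cpow_neg_div_mul_Gamma_sub_Gamma {w a : ℂ} (hw : w ≠ 0) :
    HasDerivAt (fun s : ℂ => w ^ (-(s / a)) * Complex.Gamma (s / a + 1) - Complex.Gamma (s + 1))
      (eulerMascheroniConstant - (Complex.log w + eulerMascheroniConstant) / a) 0 := by
  have hpow : HasDerivAt (fun s : ℂ => w ^ (-(s / a))) _ 0 :=
    ((hasDerivAt_id 0).div_const a).neg.const_cpow (Or.inl hw)
  have hGamma (b : ℂ) : HasDerivAt (fun s : ℂ => Complex.Gamma (s / b + 1))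
      (-eulerMascheroniConstant * (1 / b)) 0 :=
    HasDerivAt.comp 0 (by simpa using Complex.hasDerivAt_Gamma_one)
      (((hasDerivAt_id 0).div_const b).add_const 1)
  refine ((hpow.mul (hGamma a)).sub (by simpa using hGamma 1)).congr_deriv ?_
  simp only [Pi.neg_apply, zero_div, neg_zero, Complex.cpow_zero, zero_add, Complex.Gamma_one]
  ring

lemma tendsto_integral_rpow_mul_cexp_neg_mul_rpow_sub_Gamma {α : ℝ} (hα : 0 < α) {w : ℂ}
    (hw : 0 < w.re) :
    Tendsto (fun s : ℝ => (∫ t in Ioi (0 : ℝ), ((t ^ (s - 1) : ℝ) : ℂ) *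
        Complex.exp (-(w * (t ^ α : ℝ)))) - Complex.Gamma s) (𝓝[>] 0)
      (𝓝 (eulerMascheroniConstant - (Complex.log w + eulerMascheroniConstant) / α)) := by
  have hw0 : w ≠ 0 := fun h => by simp [h] at hw
  have hderiv := (hasDerivAt_cpow_neg_div_mul_Gamma_sub_Gamma (a := α) hw0).comp_ofReal (z := 0)
  refine hderiv.tendsto_slope_zero_right.congr' ?_
  filter_upwards [self_mem_nhdsWithin] with s (hs : 0 < s)
  have hs0 : (s : ℂ) ≠ 0 := mod_cast hs.ne'
  have hα0 : (α : ℂ) ≠ 0 := mod_cast hα.ne'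
  rw [integral_rpow_mul_cexp_neg_mul_rpow_Ioi hs hα hw, zero_add,
    Complex.Gamma_add_one _ (div_ne_zero hs0 hα0), Complex.Gamma_add_one _ hs0]
  simp only [Complex.ofReal_zero, zero_div, neg_zero, Complex.cpow_zero, zero_add,
    Complex.Gamma_one, mul_one, sub_self, sub_zero, Complex.real_smul, Complex.ofReal_inv]
  field_simp

lemma tendsto_integral_rpow_mul_exp_neg_sub_one_mul {f : ℝ → ℂ}
    (hf : IntegrableOn (fun t => (1 + t) * ‖f t‖) (Ioi 0)) :
    Tendsto (fun s : ℝ => ∫ t in Ioi (0 : ℝ),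
      ((t ^ (s - 1) * (Real.exp (-(s * t)) - 1) : ℝ) : ℂ) * f t) (𝓝[>] 0) (𝓝 0) := by
  have hlim : Tendsto (fun s : ℝ => s * ∫ t in Ioi 0, (1 + t) * ‖f t‖) (𝓝[>] 0) (𝓝 0) :=
    ((continuous_mul_const _).tendsto' 0 0 (zero_mul _)).mono_left nhdsWithin_le_nhds
  refine squeeze_zero_norm' ?_ hlim
  filter_upwards [Ioc_mem_nhdsGT one_pos] with s ⟨hs, hs1⟩
  rw [← integral_const_mul]
  refine norm_integral_le_of_norm_le (hf.const_mul s) ?_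
  filter_upwards [ae_restrict_mem measurableSet_Ioi] with t (ht : 0 < t)
  have hexp : |Real.exp (-(s * t)) - 1| ≤ s * t := by
    rw [abs_of_nonpos (sub_nonpos.2 (Real.exp_le_one_iff.2 (neg_nonpos.2 (by positivity))))]
    linarith [Real.one_sub_le_exp_neg (s * t)]
  have hpow : t ^ s ≤ 1 + t := by
    rcases le_total t 1 with h | h
    · linarith [Real.rpow_le_one ht.le h hs.le]
    · linarith [Real.rpow_le_self_of_one_le h hs1]
  rw [norm_mul, Complex.norm_real, norm_mul, Real.norm_eq_abs, Real.norm_eq_abs,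
    abs_of_nonneg (Real.rpow_nonneg ht.le _), ← mul_assoc]
  refine mul_le_mul_of_nonneg_right ?_ (norm_nonneg _)
  calc t ^ (s - 1) * |Real.exp (-(s * t)) - 1|
      ≤ t ^ (s - 1) * (s * t) := by gcongr
    _ = s * t ^ s := by rw [Real.rpow_sub_one ht.ne']; field_simp
    _ ≤ s * (1 + t) := by gcongr

lemma tendsto_integral_rpow_mul_exp_mul_cexp_sub_Gamma {α : ℝ} (hα : 0 < α) {w : ℂ}
    (hw : 0 < w.re) :
    Tendsto (fun s : ℝ => (∫ t in Ioi (0 : ℝ), ((t ^ (s - 1) * Real.exp (-(s * t)) : ℝ) : ℂ) *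
        Complex.exp (-(w * (t ^ α : ℝ)))) - Complex.Gamma s) (𝓝[>] 0)
      (𝓝 (eulerMascheroniConstant - (Complex.log w + eulerMascheroniConstant) / α)) := by
  have hint {s : ℝ} (hs : 0 < s) := integrableOn_rpow_mul_cexp_neg_mul_rpow hs hα hw
  have hdom : IntegrableOn (fun t : ℝ => (1 + t) * ‖Complex.exp (-(w * (t ^ α : ℝ)))‖)
      (Ioi 0) := by
    refine IntegrableOn.congr_fun ((hint one_pos).norm.add (hint two_pos).norm)
      (fun t (ht : 0 < t) => ?_) measurableSet_Ioi
    have htwo : (2 : ℝ) - 1 = 1 := by norm_num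
    simp only [Pi.add_apply, norm_mul, Complex.norm_real, sub_self, Real.rpow_zero, htwo,
      Real.rpow_one, norm_one, Real.norm_of_nonneg ht.le]
    ring
  have hlim := (tendsto_integral_rpow_mul_exp_neg_sub_one_mul hdom).add
    (tendsto_integral_rpow_mul_cexp_neg_mul_rpow_sub_Gamma hα hw)
  rw [zero_add] at hlim
  refine hlim.congr' ?_
  filter_upwards [self_mem_nhdsWithin] with s (hs : 0 < s)
  have hdamped : IntegrableOn (fun t : ℝ => ((t ^ (s - 1) * Real.exp (-(s * t)) : ℝ) : ℂ) *
      Complex.exp (-(w * (t ^ α : ℝ)))) (Ioi 0) := by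
    refine Integrable.mono (hint hs) (Measurable.aestronglyMeasurable (by fun_prop)) ?_
    filter_upwards [ae_restrict_mem measurableSet_Ioi] with t (ht : 0 < t)
    have hexp : Real.exp (-(s * t)) ≤ 1 := Real.exp_le_one_iff.2 (by simpa using by positivity)
    rw [norm_mul, norm_mul, Complex.norm_real, Complex.norm_real, norm_mul,
      Real.norm_of_nonneg (Real.exp_pos _).le]
    gcongr
    exact mul_le_of_le_one_right (norm_nonneg _) hexp
  have hsplit : ∫ t in Ioi (0 : ℝ), ((t ^ (s - 1) * (Real.exp (-(s * t)) - 1) : ℝ) : ℂ) *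
        Complex.exp (-(w * (t ^ α : ℝ))) =
      (∫ t in Ioi (0 : ℝ), ((t ^ (s - 1) * Real.exp (-(s * t)) : ℝ) : ℂ) *
        Complex.exp (-(w * (t ^ α : ℝ)))) -
      ∫ t in Ioi (0 : ℝ), ((t ^ (s - 1) : ℝ) : ℂ) * Complex.exp (-(w * (t ^ α : ℝ))) := by
    rw [← integral_sub hdamped (hint hs)]
    congr 1 with t
    push_cast
    ring
  rw [hsplit]
  ring

end LaplaceMellin

section NegativePowers

lemma norm_cexp_sub_one_le_max_mul (u : ℂ) :
    ‖Complex.exp u - 1‖ ≤ max 1 (Real.exp u.re) * ‖u‖ := by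
  have hmax : Real.exp (max 0 u.re) = max 1 (Real.exp u.re) := by
    rw [Real.exp_monotone.map_max, Real.exp_zero]
  have hmvt := (convex_halfSpace_re_le (max 0 u.re)).norm_image_sub_le_of_norm_hasDerivWithin_le
    (f := Complex.exp) (x := 0) (y := u) (C := Real.exp (max 0 u.re))
    (fun z _ => (Complex.hasDerivAt_exp z).hasDerivWithinAt)
    (fun z hz => by rw [Complex.norm_exp]; exact Real.exp_le_exp.2 hz) (by simp) (by simp)
  simpa only [Complex.exp_zero, sub_zero, hmax] using hmvt

lemma norm_cpow_neg_sub_one_le {z : ℂ} (hz : z ≠ 0) {s : ℝ} (hs : 0 ≤ s) :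
    ‖z ^ (-s : ℂ) - 1‖ ≤ max 1 (‖z‖ ^ (-s)) * (s * ‖Complex.log z‖) := by
  have hexp := norm_cexp_sub_one_le_max_mul (Complex.log z * (-s : ℂ))
  rwa [← Complex.norm_exp, ← Complex.cpow_def_of_ne_zero hz, ← Complex.ofReal_neg,
    Complex.norm_cpow_real, norm_mul, Complex.norm_real, norm_neg, Real.norm_of_nonneg hs,
    mul_comm ‖_‖ s, Complex.ofReal_neg] at hexp

lemma rpow_neg_self_le_exp_one {s : ℝ} (hs : 0 < s) : s ^ (-s) ≤ Real.exp 1 := by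
  rw [Real.rpow_def_of_pos hs]
  have hlog := mul_le_mul_of_nonneg_right (Real.one_sub_inv_le_log_of_pos hs) hs.le
  rw [sub_mul, inv_mul_cancel₀ hs.ne'] at hlog
  gcongr
  linarith

lemma abs_le_norm_ofReal_sub_I_mul_right (s x : ℝ) : |x| ≤ ‖(s - I * x : ℂ)‖ := by
  simpa using Complex.abs_im_le_norm (s - I * x : ℂ)

lemma abs_le_norm_ofReal_sub_I_mul_left (s x : ℝ) : |s| ≤ ‖(s - I * x : ℂ)‖ := by
  simpa using Complex.abs_re_le_norm (s - I * x : ℂ)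

lemma norm_log_ofReal_sub_I_mul_le {s x : ℝ} (hx : x ≠ 0) (hs : |s| ≤ 1) :
    ‖Complex.log (s - I * x)‖ ≤ |Real.log x| + 1 + π := by
  have hx_pos : 0 < |x| := abs_pos.2 hx
  have hlower : |x| ≤ ‖(s - I * x : ℂ)‖ := abs_le_norm_ofReal_sub_I_mul_right s x
  have hupper : ‖(s - I * x : ℂ)‖ ≤ Real.exp (|Real.log x| + 1) := calc
    ‖(s - I * x : ℂ)‖ ≤ |s| + |x| := by simpa using norm_sub_le (s : ℂ) (I * x)
    _ ≤ Real.exp |Real.log x| + Real.exp |Real.log x| := by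
      gcongr
      · exact hs.trans (Real.one_le_exp (abs_nonneg _))
      · rw [← Real.exp_log hx_pos, Real.log_abs]
        exact Real.exp_le_exp.2 (le_abs_self _)
    _ ≤ Real.exp (|Real.log x| + 1) := by
      rw [Real.exp_add]
      nlinarith [Real.add_one_le_exp 1, Real.exp_pos |Real.log x|]
  refine (Complex.norm_le_abs_re_add_abs_im _).trans
    (add_le_add ?_ (by simpa only [Complex.log_im] using Complex.abs_arg_le_pi _))
  rw [Complex.log_re, abs_le]
  constructor
  · have := Real.log_le_log hx_pos hlower
    rw [Real.log_abs] at this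
    linarith [neg_abs_le (Real.log x)]
  · exact (Real.log_le_iff_le_exp (hx_pos.trans_le hlower)).2 hupper

lemma norm_inv_smul_cpow_neg_self_sub_one_le {s x : ℝ} (hx : x ≠ 0) (hs : s ∈ Ioc 0 1) :
    ‖s⁻¹ • ((s - I * x : ℂ) ^ (-s : ℂ) - 1)‖ ≤ Real.exp 1 * (|Real.log x| + 1 + π) := by
  obtain ⟨hs0, hs1⟩ := hs
  have hs_le : s ≤ ‖(s - I * x : ℂ)‖ :=
    (le_abs_self s).trans (abs_le_norm_ofReal_sub_I_mul_left s x)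
  have hz : (s - I * x : ℂ) ≠ 0 := norm_pos_iff.1 (hs0.trans_le hs_le)
  have hpow : max 1 (‖(s - I * x : ℂ)‖ ^ (-s)) ≤ Real.exp 1 :=
    max_le (Real.one_le_exp zero_le_one)
      ((Real.rpow_le_rpow_of_nonpos hs0 hs_le (by linarith)).trans (rpow_neg_self_le_exp_one hs0))
  have hlog := norm_log_ofReal_sub_I_mul_le hx (abs_le.2 ⟨by linarith, hs1⟩)
  rw [norm_smul, norm_inv, Real.norm_of_nonneg hs0.le, inv_mul_le_iff₀ hs0]
  calc ‖(s - I * x : ℂ) ^ (-s : ℂ) - 1‖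
      ≤ max 1 (‖(s - I * x : ℂ)‖ ^ (-s)) * (s * ‖Complex.log (s - I * x)‖) :=
        norm_cpow_neg_sub_one_le hz hs0.le
    _ ≤ Real.exp 1 * (s * (|Real.log x| + 1 + π)) := by gcongr
    _ = s * (Real.exp 1 * (|Real.log x| + 1 + π)) := by ring

lemma tendsto_inv_smul_cpow_neg_self_sub_one {x : ℝ} (hx : x ≠ 0) :
    Tendsto (fun s : ℝ => s⁻¹ • ((s - I * x : ℂ) ^ (-s : ℂ) - 1)) (𝓝[>] 0)
      (𝓝 (-Complex.log (-(I * x)))) := by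
  have hslit : ((0 : ℝ) : ℂ) - I * x ∈ Complex.slitPlane := Or.inr (by simpa using hx)
  have hderiv := (((hasDerivAt_id _).sub_const _).cpow (hasDerivAt_id _).neg hslit).comp_ofReal
  simpa using hderiv.tendsto_slope_zero_right

end NegativePowers

section CharFun

variable {μ : Measure ℝ}

lemma integral_cpow_neg_mul_Gamma_eq_integral_charFun [IsFiniteMeasure μ] {s ε : ℝ} (hs : 0 < s)
    (hε : 0 < ε) :
    (∫ x, (ε - I * x : ℂ) ^ (-s : ℂ) ∂μ) * Complex.Gamma s =
      ∫ t in Ioi 0, ((t ^ (s - 1) * Real.exp (-(ε * t)) : ℝ) : ℂ) * charFun μ t := by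
  have hlaplace (x : ℝ) : (ε - I * x : ℂ) ^ (-s : ℂ) * Complex.Gamma s =
      ∫ t in Ioi (0 : ℝ), ((t ^ (s - 1) * Real.exp (-(ε * t)) : ℝ) : ℂ) *
        Complex.exp (t * x * I) := by
    rw [← integral_rpow_mul_cexp_neg_mul_Ioi hs (by simpa using hε)]
    refine setIntegral_congr_fun measurableSet_Ioi fun t _ => ?_
    push_cast
    rw [mul_assoc, ← Complex.exp_add]
    congr 2
    ring
  have hint : Integrable (Function.uncurry fun x t : ℝ =>
      ((t ^ (s - 1) * Real.exp (-(ε * t)) : ℝ) : ℂ) * Complex.exp (t * x * I))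
      (μ.prod (volume.restrict (Ioi 0))) := by
    refine ((integrable_const (1 : ℝ)).mul_prod
      (integrableOn_rpow_mul_exp_neg_mul hs hε)).mono ?_ (Eventually.of_forall fun p => ?_)
    · exact Measurable.aestronglyMeasurable (by unfold Function.uncurry; fun_prop)
    · rw [Function.uncurry, norm_mul, ← Complex.ofReal_mul, Complex.norm_exp_ofReal_mul_I,
        Complex.norm_real, mul_one, one_mul]
  simp_rw [← integral_mul_const, hlaplace, integral_integral_swap hint, integral_const_mul,
    charFun_apply_real]

variable [IsProbabilityMeasure μ]

lemma tendsto_inv_smul_integral_cpow_neg_self_sub_one (hμ : ∀ᵐ x ∂μ, x ≠ 0)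
    (hlog : Integrable Real.log μ) :
    Tendsto (fun s : ℝ => s⁻¹ • ((∫ x, (s - I * x : ℂ) ^ (-s : ℂ) ∂μ) - 1)) (𝓝[>] 0)
      (𝓝 (-∫ x : ℝ, Complex.log (-(I * x)) ∂μ)) := by
  have hmeas (s : ℝ) : Measurable fun x : ℝ => (s - I * x : ℂ) ^ (-s : ℂ) := by fun_prop
  have hint {s : ℝ} (hs : 0 < s) : Integrable (fun x : ℝ => (s - I * x : ℂ) ^ (-s : ℂ)) μ := by
    refine .of_bound (hmeas s).aestronglyMeasurable (s ^ (-s)) (Eventually.of_forall fun x => ?_)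
    rw [← Complex.ofReal_neg, Complex.norm_cpow_real]
    exact Real.rpow_le_rpow_of_nonpos hs
      ((le_abs_self s).trans (abs_le_norm_ofReal_sub_I_mul_left s x)) (by linarith)
  have hdct : Tendsto (fun s : ℝ => ∫ x : ℝ, s⁻¹ • ((s - I * x : ℂ) ^ (-s : ℂ) - 1) ∂μ) (𝓝[>] 0)
      (𝓝 (∫ x : ℝ, -Complex.log (-(I * x)) ∂μ)) := by
    refine tendsto_integral_filter_of_dominated_convergence
      (fun x => Real.exp 1 * (|Real.log x| + 1 + π))
      (Eventually.of_forall fun s =>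
        (((hmeas s).sub_const 1).const_smul s⁻¹).aestronglyMeasurable) ?_
      (((hlog.abs.add (integrable_const 1)).add (integrable_const π)).const_mul _)
      (hμ.mono fun x hx => tendsto_inv_smul_cpow_neg_self_sub_one hx)
    filter_upwards [Ioc_mem_nhdsGT one_pos] with s hs
    filter_upwards [hμ] with x hx using norm_inv_smul_cpow_neg_self_sub_one_le hx hs
  rw [← integral_neg]
  refine hdct.congr' ?_
  filter_upwards [self_mem_nhdsWithin] with s (hs : 0 < s)
  rw [integral_smul, integral_sub (hint hs) (integrable_const 1)]
  simp

theorem integral_log_neg_I_mul_eq_of_charFun_eq_cexp_neg_mul_rpow (hμ : ∀ᵐ x ∂μ, x ≠ 0)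
    (hlog : Integrable Real.log μ) {α : ℝ} {w : ℂ} (hα : 0 < α) (hw : 0 < w.re)
    (hφ : ∀ t > 0, charFun μ t = Complex.exp (-(w * (t ^ α : ℝ)))) :
    ∫ x : ℝ, Complex.log (-(I * x)) ∂μ =
      (Complex.log w + eulerMascheroniConstant) / α - eulerMascheroniConstant := by
  have hGamma : Tendsto (fun s : ℝ => Complex.Gamma (s + 1)) (𝓝[>] 0) (𝓝 1) := by
    have hcont : ContinuousAt (fun s : ℝ => Complex.Gamma (s + 1)) 0 :=
      ContinuousAt.comp (f := fun s : ℝ => (s + 1 : ℂ))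
        (by simpa using Complex.hasDerivAt_Gamma_one.continuousAt) (by fun_prop)
    simpa using hcont.tendsto.mono_left nhdsWithin_le_nhds
  have hmoment := hGamma.mul (tendsto_inv_smul_integral_cpow_neg_self_sub_one hμ hlog)
  have hMellin := tendsto_integral_rpow_mul_exp_mul_cexp_sub_Gamma hα hw
  have heq : -∫ x : ℝ, Complex.log (-(I * x)) ∂μ =
      eulerMascheroniConstant - (Complex.log w + eulerMascheroniConstant) / α := by
    rw [← one_mul (-_)]
    refine tendsto_nhds_unique (hmoment.congr' ?_) hMellin
    filter_upwards [self_mem_nhdsWithin] with s (hs : 0 < s)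
    have hs0 : (s : ℂ) ≠ 0 := mod_cast hs.ne'
    have hcharFun : ∫ t in Ioi 0, ((t ^ (s - 1) * Real.exp (-(s * t)) : ℝ) : ℂ) * charFun μ t =
        ∫ t in Ioi 0, ((t ^ (s - 1) * Real.exp (-(s * t)) : ℝ) : ℂ) *
          Complex.exp (-(w * (t ^ α : ℝ))) :=
      setIntegral_congr_fun measurableSet_Ioi fun t ht => by simp only [hφ t ht]
    rw [← hcharFun, ← integral_cpow_neg_mul_Gamma_eq_integral_charFun hs hs,
      Complex.Gamma_add_one _ hs0, Complex.real_smul, Complex.ofReal_inv]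
    field_simp
  linear_combination -heq

lemma eq_dirac_of_charFun_eq_cexp_mul_I {c : ℝ}
    (hφ : ∀ t > 0, charFun μ t = Complex.exp (t * c * I)) : μ = Measure.dirac c := by
  refine Measure.ext_of_charFun (funext fun t => ?_)
  have hdirac (t : ℝ) : charFun (Measure.dirac c) t = Complex.exp (t * c * I) := by
    simp [charFun_dirac]
  rcases lt_trichotomy t 0 with ht | rfl | ht
  · rw [← neg_neg t, charFun_neg, charFun_neg (μ := .dirac c), hφ _ (neg_pos.2 ht), hdirac]
  · simp
  · rw [hφ t ht, hdirac]

theorem integral_log_neg_I_mul_eq_of_charFun_eq_cexp_neg_mul {w : ℂ} (hw : w.re = 0)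
    (hφ : ∀ t > 0, charFun μ t = Complex.exp (-(w * t))) :
    ∫ x : ℝ, Complex.log (-(I * x)) ∂μ = Complex.log w := by
  have hw' : w = w.im * I := by apply Complex.ext <;> simp [hw]
  have hdirac : μ = Measure.dirac (-w.im) := by
    refine eq_dirac_of_charFun_eq_cexp_mul_I fun t ht => ?_
    rw [hφ t ht]
    congr 1
    push_cast
    linear_combination (-t : ℂ) * hw'
  rw [hdirac, integral_dirac]
  congr 1
  rw [Complex.ofReal_neg, mul_neg, neg_neg, mul_comm, ← hw']

end CharFun

section SignAndLog

lemma log_neg_I_mul_ofReal (x : ℝ) :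
    Complex.log (-(I * x)) = Real.log x - I * (π / 2) * Real.sign x := by
  rcases lt_trichotomy x 0 with hx | rfl | hx
  · rw [show -(I * x) = ((-x : ℝ) : ℂ) * I by push_cast; ring,
      Complex.log_ofReal_mul (neg_pos.2 hx) Complex.I_ne_zero, Real.log_neg_eq_log, Complex.log_I,
      Real.sign_of_neg hx]
    push_cast
    ring
  · simp
  · rw [show -(I * x) = (x : ℂ) * -I by ring,
      Complex.log_ofReal_mul hx (neg_ne_zero.2 Complex.I_ne_zero), Complex.log_neg_I,
      Real.sign_of_pos hx]
    push_cast
    ring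

lemma measurable_real_sign : Measurable Real.sign :=
  .ite measurableSet_Iio measurable_const (.ite measurableSet_Ioi measurable_const measurable_const)

lemma integrable_real_sign (μ : Measure ℝ) [IsFiniteMeasure μ] : Integrable Real.sign μ := by
  refine .of_bound measurable_real_sign.aestronglyMeasurable 1 (Eventually.of_forall fun x => ?_)
  rcases Real.sign_apply_eq x with h | h | h <;> simp [h]

lemma integral_log_neg_I_mul_eq_sub {μ : Measure ℝ} [IsFiniteMeasure μ]
    (hlog : Integrable Real.log μ) :
    ∫ x : ℝ, Complex.log (-(I * x)) ∂μ =
      (∫ x, Real.log x ∂μ : ℝ) - I * (π / 2) * (∫ x, Real.sign x ∂μ : ℝ) := by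
  simp_rw [log_neg_I_mul_ofReal]
  rw [integral_sub hlog.ofReal ((integrable_real_sign μ).ofReal.const_mul _), integral_const_mul,
    integral_complex_ofReal, integral_complex_ofReal]

end SignAndLog

section StableLaw

/-- The logarithm of the coefficient `w` for which the strictly stable law of index `α`, asymmetry
`θ` and logarithmic scale `τ` has characteristic function `exp (-(w * k ^ α))` at `k > 0`. In the
parametrization by `(ν, θ, τ)` the index is `α = ν ^ (-1 / 2)`. -/
noncomputable def stableLogCoeff (α θ τ : ℝ) : ℂ :=
  α * (τ - I * (π / 2) * θ) + eulerMascheroniConstant * (α - 1)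

variable {α θ τ : ℝ}

lemma stableLogCoeff_im : (stableLogCoeff α θ τ).im = -(α * θ * (π / 2)) := by
  have hsplit : stableLogCoeff α θ τ = ((α * τ + eulerMascheroniConstant * (α - 1) : ℝ) : ℂ) +
      ((-(α * θ * (π / 2)) : ℝ) : ℂ) * I := by
    rw [stableLogCoeff]
    push_cast
    ring
  rw [hsplit, Complex.add_im, Complex.im_ofReal_mul, Complex.ofReal_im, Complex.I_im, zero_add,
    mul_one]

lemma re_exp_stableLogCoeff : (Complex.exp (stableLogCoeff α θ τ)).re =
    Real.exp (stableLogCoeff α θ τ).re * Real.cos (|α * θ| * (π / 2)) := by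
  rw [Complex.exp_re, stableLogCoeff_im, Real.cos_neg, ← Real.cos_abs, abs_mul,
    abs_of_pos Real.pi_div_two_pos]

lemma log_exp_stableLogCoeff (hαθ : |α * θ| ≤ 1) :
    Complex.log (Complex.exp (stableLogCoeff α θ τ)) = stableLogCoeff α θ τ := by
  obtain ⟨hlower, hupper⟩ := abs_le.1 hαθ
  apply Complex.log_exp <;> rw [stableLogCoeff_im] <;> nlinarith [Real.pi_pos]

lemma stableLogCoeff_add_div_sub (hα : α ≠ 0) :
    (stableLogCoeff α θ τ + eulerMascheroniConstant) / α - eulerMascheroniConstant =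
      τ - I * (π / 2) * θ := by
  have hα' : (α : ℂ) ≠ 0 := mod_cast hα
  rw [stableLogCoeff]
  field_simp
  ring

variable {μ : Measure ℝ} [IsProbabilityMeasure μ]

theorem integral_log_neg_I_mul_eq_of_stable (hμ : ∀ᵐ x ∂μ, x ≠ 0) (hlog : Integrable Real.log μ)
    (hα : 0 < α) (hαθ : |α * θ| < 1 ∨ |α * θ| = 1 ∧ α = 1)
    (hφ : ∀ t > 0, charFun μ t =
      Complex.exp (-(Complex.exp (stableLogCoeff α θ τ) * (t ^ α : ℝ)))) :
    ∫ x : ℝ, Complex.log (-(I * x)) ∂μ = τ - I * (π / 2) * θ := by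
  have hlogexp := log_exp_stableLogCoeff (τ := τ) (hαθ.elim le_of_lt fun h => h.1.le)
  rw [← stableLogCoeff_add_div_sub hα.ne']
  rcases hαθ with hlt | ⟨heq, rfl⟩
  · have hre : 0 < (Complex.exp (stableLogCoeff α θ τ)).re := by
      rw [re_exp_stableLogCoeff]
      refine mul_pos (Real.exp_pos _) (Real.cos_pos_of_mem_Ioo ⟨?_, ?_⟩) <;>
        nlinarith [Real.pi_pos, abs_nonneg (α * θ)]
    rw [integral_log_neg_I_mul_eq_of_charFun_eq_cexp_neg_mul_rpow hμ hlog hα hre hφ, hlogexp]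
  · have hre : (Complex.exp (stableLogCoeff 1 θ τ)).re = 0 := by
      rw [re_exp_stableLogCoeff, heq, one_mul, Real.cos_pi_div_two, mul_zero]
    rw [integral_log_neg_I_mul_eq_of_charFun_eq_cexp_neg_mul hre
      (by simpa only [Real.rpow_one] using hφ), hlogexp]
    simp

theorem integral_sign_eq_and_integral_log_eq_of_stable (hμ : ∀ᵐ x ∂μ, x ≠ 0)
    (hlog : Integrable Real.log μ) (hα : 0 < α) (hαθ : |α * θ| < 1 ∨ |α * θ| = 1 ∧ α = 1)
    (hφ : ∀ t > 0, charFun μ t =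
      Complex.exp (-(Complex.exp (stableLogCoeff α θ τ) * (t ^ α : ℝ)))) :
    ∫ x, Real.sign x ∂μ = θ ∧ ∫ x, Real.log x ∂μ = τ := by
  have hmean := (integral_log_neg_I_mul_eq_sub hlog).symm.trans
    (integral_log_neg_I_mul_eq_of_stable hμ hlog hα hαθ hφ)
  exact ⟨by simpa [Real.pi_ne_zero] using congrArg Complex.im hmean,
    by simpa using congrArg Complex.re hmean⟩

lemma stable_index_admissible {ν θ : ℝ} (hθ : |θ| ≤ min 1 (2 * √ν - 1)) :
    0 < ν ^ (-(1 / 2) : ℝ) ∧ (|ν ^ (-(1 / 2) : ℝ) * θ| < 1 ∨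
      |ν ^ (-(1 / 2) : ℝ) * θ| = 1 ∧ ν ^ (-(1 / 2) : ℝ) = 1) := by
  obtain ⟨hθ1, hθν⟩ := le_min_iff.1 hθ
  have hsqrt : 0 < √ν := by linarith [abs_nonneg θ]
  have hindex : ν ^ (-(1 / 2) : ℝ) = (√ν)⁻¹ := by
    rw [Real.rpow_neg (Real.sqrt_pos.1 hsqrt).le, Real.sqrt_eq_rpow]
  rw [hindex, abs_mul, abs_of_pos (inv_pos.2 hsqrt), inv_mul_lt_iff₀ hsqrt,
    inv_mul_eq_one₀ hsqrt.ne', inv_eq_one, mul_one]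
  refine ⟨inv_pos.2 hsqrt, (lt_or_ge |θ| √ν).imp_right fun h => ?_⟩
  constructor <;> linarith

end StableLaw

theorem mean_sign_and_log_of_strictlyStable_general {Ω : Type*} [MeasurableSpace Ω] {P : Measure Ω}
    [IsProbabilityMeasure P] {X : Ω → ℝ} {ν θ τ : ℝ} (hX : AEMeasurable X P)
    (hθ : |θ| ≤ min 1 (2 * √ν - 1)) (hX0 : ∀ᵐ ω ∂P, X ω ≠ 0)
    (hlog : Integrable (fun ω => Real.log |X ω|) P)
    (hφ : ∀ k > 0, ∫ ω, Complex.exp (I * (k : ℝ) * X ω) ∂P =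
      Complex.exp (-Complex.exp ((ν ^ (-(1 / 2) : ℝ) : ℝ) * (Real.log k + τ - I * (π / 2) * θ) +
        eulerMascheroniConstant * ((ν ^ (-(1 / 2) : ℝ) : ℝ) - 1)))) :
    Integrable (fun ω => Real.sign (X ω)) P ∧ Integrable (fun ω => Real.log |X ω|) P ∧
      ∫ ω, Real.sign (X ω) ∂P = θ ∧ ∫ ω, Real.log |X ω| ∂P = τ := by
  have := Measure.isProbabilityMeasure_map hX
  simp_rw [Real.log_abs] at hlog ⊢
  obtain ⟨hα, hαθ⟩ := stable_index_admissible hθ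
  have hmap0 : ∀ᵐ x ∂P.map X, x ≠ 0 :=
    (ae_map_iff hX (measurableSet_singleton 0).compl).2 hX0
  have hmapφ (k : ℝ) (hk : k > 0) : charFun (P.map X) k =
      Complex.exp (-(Complex.exp (stableLogCoeff (ν ^ (-(1 / 2) : ℝ)) θ τ) *
        (k ^ (ν ^ (-(1 / 2) : ℝ)) : ℝ))) := by
    rw [charFun_apply_real, integral_map hX (Measurable.aestronglyMeasurable (by fun_prop)),
      stableLogCoeff, Real.rpow_def_of_pos hk, Complex.ofReal_exp, ← Complex.exp_add]
    convert hφ k hk using 4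
    · ring
    · push_cast
      ring
  refine ⟨(integrable_real_sign _).comp_aemeasurable hX, hlog, ?_⟩
  rw [← integral_map hX measurable_real_sign.aestronglyMeasurable,
    ← integral_map hX Real.measurable_log.aestronglyMeasurable]
  exact integral_sign_eq_and_integral_log_eq_of_stable hmap0
    ((integrable_map_measure Real.measurable_log.aestronglyMeasurable hX).2 hlog) hα hαθ hmapφ

theorem mean_sign_and_log_of_strictlyStable {Ω : Type*} [MeasureSpace Ω]
    [IsProbabilityMeasure (ℙ : Measure Ω)] (X : Ω → ℝ) (ν θ τ : ℝ)
    (hX : IsStrictlyStable X ν θ τ) :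
    Integrable (fun ω => Real.sign (X ω)) ∧ Integrable (fun ω => Real.log |X ω|) ∧
    (∫ ω, Real.sign (X ω)) = θ ∧ (∫ ω, Real.log |X ω|) = τ := by
  obtain ⟨hmeas, -, hθ, hX0, hlog, hφ⟩ := hX
  exact mean_sign_and_log_of_strictlyStable_general hmeas.aemeasurable hθ
    (measure_eq_zero_iff_ae_notMem.1 hX0)
    ((hlog 1).mono (Measurable.aestronglyMeasurable (by fun_prop)) (by simp))
    fun k hk => by simpa [Real.sign_of_pos hk, abs_of_pos hk] using hφ k hk.ne'
end

section
/- Let X be a strictly stable random variable with parameters (ν, θ, τ). Then E[(log|X|)²] = τ² + DV, where DV = (π²/4)(1 − θ²) + (π²/6)(ν − 1). Equivalently, the variance of log|X| equals DV. -/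
open MeasureTheory ProbabilityTheory

/-!
For a strictly stable law `μ` the Mellin transform of the characteristic function is explicit. On
the other hand, after damping by `exp (-ε t)` Fubini turns it into the integral against `μ` of
`Γ(u) (ε - i x) ^ (-u)`, and letting `ε → 0` gives `Γ(u) cos(π u / 2) E|X|^(-u)` as its real part.
Comparing the two,

  `Γ(1 + u) cos(π u / 2) E|X|^(-u) = Γ(1 + u / α) ‖a‖ ^ (-u / α) cos(arg a · u / α)`

for `0 < u < 1`, where `E exp(i k X) = exp (-a k ^ α)` for `k > 0`. The logarithm of `E|X|^(-u)` is
the cumulant generating function of `-log |X|`, so its expansion to second order as `u → 0+` gives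
the mean and the variance of `log |X|`. Here `log Γ(1 + u) = -C u + (π² / 12) u² + o(u²)`, the
quadratic coefficient being forced by the reflection formula.
-/

open Set Filter Topology

section Mellin

/-- The measure `t ^ (u - 1) dt` on `(0, ∞)`, against which the Mellin transform at the real
point `u` is an integral. -/
noncomputable def mellinMeasure (u : ℝ) : Measure ℝ :=
  (volume.restrict (Ioi 0)).withDensity fun t => ENNReal.ofReal (t ^ (u - 1))

instance (u : ℝ) : SigmaFinite (mellinMeasure u) :=
  SigmaFinite.withDensity_ofReal _

lemma ae_mellinMeasure_pos (u : ℝ) : ∀ᵐ t ∂mellinMeasure u, 0 < t :=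
  (withDensity_absolutelyContinuous _ _).ae_le (ae_restrict_mem measurableSet_Ioi)

variable {E : Type*} [NormedAddCommGroup E] [NormedSpace ℂ E] {u : ℝ}

lemma toReal_rpow_smul_eq_cpow_smul {t : ℝ} (ht : 0 < t) (u : ℝ) (x : E) :
    (ENNReal.ofReal (t ^ (u - 1))).toReal • x = (t : ℂ) ^ ((u : ℂ) - 1) • x := by
  rw [ENNReal.toReal_ofReal (Real.rpow_nonneg ht.le _), ← Complex.coe_smul,
    Complex.ofReal_cpow ht.le, Complex.ofReal_sub, Complex.ofReal_one]

lemma mellin_ofReal_eq_integral (f : ℝ → E) (u : ℝ) :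
    mellin f u = ∫ t, f t ∂mellinMeasure u := by
  rw [mellinMeasure, integral_withDensity_eq_integral_toReal_smul (by fun_prop) (by simp), mellin]
  exact setIntegral_congr_fun measurableSet_Ioi
    fun t ht => (toReal_rpow_smul_eq_cpow_smul ht u (f t)).symm

lemma mellinConvergent_ofReal_iff_integrable {f : ℝ → E} :
    MellinConvergent f u ↔ Integrable f (mellinMeasure u) := by
  rw [mellinMeasure, integrable_withDensity_iff_integrable_smul' (by fun_prop) (by simp),
    MellinConvergent]
  exact integrableOn_congr_fun
    (fun t ht => (toReal_rpow_smul_eq_cpow_smul ht u (f t)).symm) measurableSet_Ioi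

lemma mellinConvergent_cexp_neg_mul (hu : 0 < u) {r : ℂ} (hr : 0 < r.re) :
    MellinConvergent (fun t : ℝ => Complex.exp (-(r * t))) u := by
  rw [MellinConvergent, mellin_convergent_iff_norm subset_rfl measurableSet_Ioi
    (Continuous.aestronglyMeasurable (by fun_prop))]
  simpa [Complex.norm_exp] using
    integrableOn_rpow_mul_exp_neg_mul_rpow (s := u - 1) (by linarith) one_pos hr

lemma complexMGF_neg_mellinMeasure (u : ℝ) (r : ℂ) :
    complexMGF (fun t => -t) (mellinMeasure u) r =
      mellin (fun t : ℝ => Complex.exp (-(r * t))) u := by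
  simp [complexMGF, mellin_ofReal_eq_integral]

lemma analyticOnNhd_mellin_cexp_neg_mul (hu : 0 < u) :
    AnalyticOnNhd ℂ (fun r => mellin (fun t : ℝ => Complex.exp (-(r * t))) u)
      {r | 0 < r.re} := by
  have integrable_exp : Ioi 0 ⊆ integrableExpSet (fun t => -t) (mellinMeasure u) := by
    intro x hx
    have h := mellinConvergent_ofReal_iff_integrable.1
      (mellinConvergent_cexp_neg_mul hu (r := x) (by simpa using hx))
    simpa [integrableExpSet, Complex.norm_exp] using h.norm
  simp_rw [← complexMGF_neg_mellinMeasure]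
  exact analyticOnNhd_complexMGF.mono fun r hr => interior_maximal integrable_exp isOpen_Ioi hr

lemma mellin_cexp_neg_mul (hu : 0 < u) {r : ℂ} (hr : 0 < r.re) :
    mellin (fun t : ℝ => Complex.exp (-(r * t))) u = r ^ (-u : ℂ) * Real.Gamma u := by
  have analytic_rhs :
      AnalyticOnNhd ℂ (fun r : ℂ => r ^ (-u : ℂ) * Real.Gamma u) {r | 0 < r.re} := by
    intro z hz
    have mem_slitPlane : z ∈ Complex.slitPlane := Or.inl hz
    fun_prop (disch := assumption)
  have eq_on_reals : ∀ x : ℝ, 0 < x →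
      mellin (fun t : ℝ => Complex.exp (-(x * t))) u = (x : ℂ) ^ (-u : ℂ) * Real.Gamma u := by
    intro x hx
    have arg_ne_pi : (x : ℂ).arg ≠ Real.pi := by
      rw [Complex.arg_ofReal_of_nonneg hx.le]
      exact Real.pi_pos.ne
    simpa [mellin, Complex.Gamma_ofReal, Complex.cpow_neg, Complex.inv_cpow _ _ arg_ne_pi] using
      Complex.integral_cpow_mul_exp_neg_mul_Ioi (a := u) (by simpa using hu) hx
  have reals_accumulate : Tendsto (fun x : ℝ => (x : ℂ)) (𝓝[≠] 1) (𝓝[≠] 1) :=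
    Complex.continuous_ofReal.continuousWithinAt.tendsto_nhdsWithin fun x hx => by simpa using hx
  refine (analyticOnNhd_mellin_cexp_neg_mul hu).eqOn_of_preconnected_of_frequently_eq analytic_rhs
    (convex_halfSpace_re_gt 0).isPreconnected (z₀ := 1) (by simp)
    (reals_accumulate.frequently (Eventually.frequently ?_)) hr
  filter_upwards [eventually_nhdsWithin_of_eventually_nhds (lt_mem_nhds one_pos)] with x hx
  exact eq_on_reals x hx

lemma mellinConvergent_cexp_neg_mul_rpow (hu : 0 < u) {α : ℝ} (hα : 0 < α) {a : ℂ}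
    (ha : 0 < a.re) : MellinConvergent (fun t : ℝ => Complex.exp (-(a * (t ^ α : ℝ)))) u := by
  rw [MellinConvergent.comp_rpow (f := fun t : ℝ => Complex.exp (-(a * t))) hα.ne',
    ← Complex.ofReal_div]
  exact mellinConvergent_cexp_neg_mul (div_pos hu hα) ha

lemma mellin_cexp_neg_mul_rpow (hu : 0 < u) {α : ℝ} (hα : 0 < α) {a : ℂ} (ha : 0 < a.re) :
    mellin (fun t : ℝ => Complex.exp (-(a * (t ^ α : ℝ)))) u =
      α⁻¹ * (a ^ (-(u / α : ℝ) : ℂ) * Real.Gamma (u / α)) := by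
  rw [mellin_comp_rpow (fun t : ℝ => Complex.exp (-(a * t))), ← Complex.ofReal_div,
    mellin_cexp_neg_mul (div_pos hu hα) ha, abs_of_pos hα, Complex.real_smul, Complex.ofReal_inv]

lemma tendsto_mellin_exp_neg_mul_smul {f : ℝ → E} (hf : MellinConvergent f u) :
    Tendsto (fun ε : ℝ => mellin (fun t => Real.exp (-(ε * t)) • f t) u) (𝓝[>] 0)
      (𝓝 (mellin f u)) := by
  simp_rw [mellin_ofReal_eq_integral]
  rw [mellinConvergent_ofReal_iff_integrable] at hf
  refine tendsto_integral_filter_of_dominated_convergence (fun t => ‖f t‖)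
    (.of_forall fun ε => ?_) ?_ hf.norm (.of_forall fun t => ?_)
  · have continuous_damping : Continuous fun t => Real.exp (-(ε * t)) := by fun_prop
    exact continuous_damping.aestronglyMeasurable.smul hf.aestronglyMeasurable
  · filter_upwards [self_mem_nhdsWithin] with ε (hε : 0 < ε)
    filter_upwards [ae_mellinMeasure_pos u] with t ht
    rw [norm_smul, Real.norm_of_nonneg (Real.exp_nonneg _)]
    exact mul_le_of_le_one_left (norm_nonneg _) (Real.exp_le_one_iff.2 (by nlinarith))
  · have damping_zero :
        Tendsto (fun ε : ℝ => Real.exp (-(ε * t)) • f t) (𝓝 0) (𝓝 (Real.exp (-(0 * t)) • f t)) :=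
      (Continuous.tendsto (f := fun ε => Real.exp (-(ε * t))) (by fun_prop) 0).smul_const (f t)
    simpa using damping_zero.mono_left nhdsWithin_le_nhds

end Mellin
section NegativeMoments

variable {μ : Measure ℝ} [IsFiniteMeasure μ] {u : ℝ}

lemma mellin_exp_neg_mul_smul_charFun (hu : 0 < u) {ε : ℝ} (hε : 0 < ε) :
    mellin (fun t => Real.exp (-(ε * t)) • charFun μ t) u =
      Real.Gamma u * ∫ x : ℝ, (ε - x * Complex.I) ^ (-u : ℂ) ∂μ := by
  have integrable_damping : Integrable (fun t => Real.exp (-(ε * t))) (mellinMeasure u) := by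
    simpa [Complex.norm_exp] using (mellinConvergent_ofReal_iff_integrable.1
      (mellinConvergent_cexp_neg_mul hu (r := ε) (by simpa using hε))).norm
  have integrable_prod : Integrable (fun p : ℝ × ℝ =>
      Complex.exp (-((ε - p.2 * Complex.I) * p.1))) ((mellinMeasure u).prod μ) := by
    refine (integrable_damping.comp_fst μ).mono'
      (Continuous.aestronglyMeasurable (by fun_prop)) (.of_forall fun p => ?_)
    simp [Complex.norm_exp]
  calc mellin (fun t => Real.exp (-(ε * t)) • charFun μ t) u
      = ∫ t, ∫ x : ℝ, Complex.exp (-((ε - x * Complex.I) * t)) ∂μ ∂mellinMeasure u := by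
        rw [mellin_ofReal_eq_integral]
        congr with t
        rw [charFun_apply_real, Complex.real_smul, ← integral_const_mul]
        congr with x
        rw [Complex.ofReal_exp, ← Complex.exp_add]
        push_cast
        ring_nf
    _ = ∫ x : ℝ, ∫ t : ℝ, Complex.exp (-((ε - x * Complex.I) * t)) ∂mellinMeasure u ∂μ :=
        integral_integral_swap integrable_prod
    _ = Real.Gamma u * ∫ x : ℝ, (ε - x * Complex.I) ^ (-u : ℂ) ∂μ := by
        rw [← integral_const_mul]
        congr with x
        rw [← mellin_ofReal_eq_integral, mellin_cexp_neg_mul hu (by simpa using hε), mul_comm]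

lemma re_cpow_neg_ofReal (z : ℂ) (u : ℝ) :
    (z ^ (-u : ℂ)).re = ‖z‖ ^ (-u) * Real.cos (|z.arg| * u) := by
  rw [← Complex.ofReal_neg, Complex.cpow_ofReal_re, mul_neg, Real.cos_neg]
  rcases abs_choice z.arg with h | h <;> simp [h]

-- This positivity turns convergence of the damped Mellin transforms into integrability of
-- `|x| ^ (-u)`.
lemma norm_rpow_neg_mul_cos_le_re_cpow_neg {z : ℂ} (hz : 0 ≤ z.re) (hu : 0 ≤ u) (hu' : u ≤ 2) :
    ‖z‖ ^ (-u) * Real.cos (Real.pi / 2 * u) ≤ (z ^ (-u : ℂ)).re := by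
  rw [re_cpow_neg_ofReal]
  have arg_le : |z.arg| * u ≤ Real.pi / 2 * u :=
    mul_le_mul_of_nonneg_right (Complex.abs_arg_le_pi_div_two_iff.2 hz) hu
  refine mul_le_mul_of_nonneg_left
    (Real.cos_le_cos_of_nonneg_of_le_pi (by positivity) ?_ arg_le) (by positivity)
  nlinarith [Real.pi_pos]

lemma re_cpow_neg_of_re_eq_zero {z : ℂ} (hz : z.re = 0) (hz0 : z ≠ 0) (u : ℝ) :
    (z ^ (-u : ℂ)).re = ‖z‖ ^ (-u) * Real.cos (Real.pi / 2 * u) := by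
  have abs_arg : |z.arg| = Real.pi / 2 :=
    (Complex.abs_arg_le_pi_div_two_iff.2 hz.ge).eq_of_not_lt
      (by simp [Complex.abs_arg_lt_pi_div_two_iff, hz, hz0])
  rw [re_cpow_neg_ofReal, abs_arg]

lemma integrable_sub_mul_I_cpow_neg (hu : 0 ≤ u) {ε : ℝ} (hε : 0 < ε) :
    Integrable (fun x : ℝ => (ε - x * Complex.I : ℂ) ^ (-u : ℂ)) μ := by
  refine Integrable.of_bound (Measurable.aestronglyMeasurable (by fun_prop)) (ε ^ (-u))
    (.of_forall fun x => ?_)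
  rw [← Complex.ofReal_neg, Complex.norm_cpow_real]
  exact Real.rpow_le_rpow_of_nonpos hε
    (by simpa [abs_of_pos hε] using Complex.abs_re_le_norm (ε - x * Complex.I)) (by linarith)

lemma re_mellin_exp_neg_mul_smul_charFun (hu : 0 < u) {ε : ℝ} (hε : 0 < ε) :
    (mellin (fun t => Real.exp (-(ε * t)) • charFun μ t) u).re =
      Real.Gamma u * ∫ x : ℝ, ((ε - x * Complex.I : ℂ) ^ (-u : ℂ)).re ∂μ := by
  rw [mellin_exp_neg_mul_smul_charFun hu hε, Complex.re_ofReal_mul]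
  exact congrArg _ (integral_re (integrable_sub_mul_I_cpow_neg hu.le hε)).symm

lemma lintegral_enorm_sub_mul_I_rpow_neg_le (hu : 0 < u) (hu' : u < 1) {ε : ℝ} (hε : 0 < ε) :
    ∫⁻ x : ℝ, ‖(ε - x * Complex.I : ℂ)‖ₑ ^ (-u) ∂μ ≤
      ENNReal.ofReal ((mellin (fun t => Real.exp (-(ε * t)) • charFun μ t) u).re /
        (Real.Gamma u * Real.cos (Real.pi / 2 * u))) := by
  have cos_pos : 0 < Real.cos (Real.pi / 2 * u) :=
    Real.cos_pos_of_mem_Ioo ⟨by nlinarith [Real.pi_pos], by nlinarith [Real.pi_pos]⟩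
  have kernel_integrable := integrable_sub_mul_I_cpow_neg (μ := μ) hu.le hε
  have enorm_eq (x : ℝ) : ‖(ε - x * Complex.I : ℂ)‖ₑ ^ (-u) =
      ‖(ε - x * Complex.I : ℂ) ^ (-u : ℂ)‖ₑ := by
    have ne_zero : (ε - x * Complex.I : ℂ) ≠ 0 :=
      fun h => hε.ne' (by simpa using congrArg Complex.re h)
    rw [← ofReal_norm, ← ofReal_norm, ENNReal.ofReal_rpow_of_pos (norm_pos_iff.2 ne_zero),
      ← Complex.ofReal_neg, Complex.norm_cpow_real]
  have norm_le (x : ℝ) : ‖(ε - x * Complex.I : ℂ) ^ (-u : ℂ)‖ ≤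
      ((ε - x * Complex.I : ℂ) ^ (-u : ℂ)).re / Real.cos (Real.pi / 2 * u) := by
    rw [← Complex.ofReal_neg, Complex.norm_cpow_real, le_div_iff₀ cos_pos, Complex.ofReal_neg]
    exact norm_rpow_neg_mul_cos_le_re_cpow_neg (by simpa using hε.le) hu.le (by linarith)
  simp_rw [enorm_eq]
  rw [← ofReal_integral_norm_eq_lintegral_enorm kernel_integrable,
    re_mellin_exp_neg_mul_smul_charFun hu hε, mul_div_mul_left _ _ (Real.Gamma_pos_of_pos hu).ne',
    ← integral_div]
  exact ENNReal.ofReal_le_ofReal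
    (integral_mono kernel_integrable.norm (kernel_integrable.re.div_const _) norm_le)

lemma lintegral_enorm_rpow_neg_lt_top (hu : 0 < u) (hu' : u < 1)
    (hμ : MellinConvergent (charFun μ) u) : ∫⁻ x, ‖x‖ₑ ^ (-u) ∂μ < ⊤ := by
  have tendsto_enorm (x : ℝ) : Tendsto (fun ε : ℝ => ‖(ε - x * Complex.I : ℂ)‖ₑ ^ (-u)) (𝓝[>] 0)
      (𝓝 (‖x‖ₑ ^ (-u))) := by
    have h : Continuous fun ε : ℝ => ‖(ε - x * Complex.I : ℂ)‖ₑ ^ (-u) :=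
      ENNReal.continuous_rpow_const.comp (Continuous.enorm (by fun_prop))
    simpa [Real.enorm_eq_ofReal_abs, ← ofReal_norm] using
      (h.tendsto 0).mono_left nhdsWithin_le_nhds
  have tendsto_mellin := ENNReal.tendsto_ofReal
    (((Complex.continuous_re.tendsto _).comp (tendsto_mellin_exp_neg_mul_smul hμ)).div_const
      (Real.Gamma u * Real.cos (Real.pi / 2 * u)))
  calc ∫⁻ x, ‖x‖ₑ ^ (-u) ∂μ
      = ∫⁻ x : ℝ, liminf (fun ε : ℝ => ‖(ε - x * Complex.I : ℂ)‖ₑ ^ (-u)) (𝓝[>] 0) ∂μ := by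
        simp_rw [fun x => (tendsto_enorm x).liminf_eq]
    _ ≤ liminf (fun ε : ℝ => ∫⁻ x : ℝ, ‖(ε - x * Complex.I : ℂ)‖ₑ ^ (-u) ∂μ) (𝓝[>] 0) :=
        lintegral_liminf_le' fun ε => Measurable.aemeasurable (by fun_prop)
    _ ≤ ENNReal.ofReal ((mellin (charFun μ) u).re /
          (Real.Gamma u * Real.cos (Real.pi / 2 * u))) := by
        rw [← tendsto_mellin.liminf_eq]
        refine liminf_le_liminf ?_
        filter_upwards [self_mem_nhdsWithin] with ε hε
        exact lintegral_enorm_sub_mul_I_rpow_neg_le hu hu' hε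
    _ < ⊤ := ENNReal.ofReal_lt_top

lemma ae_ne_zero_of_mellinConvergent_charFun (hu : 0 < u) (hu' : u < 1)
    (hμ : MellinConvergent (charFun μ) u) : ∀ᵐ x ∂μ, x ≠ 0 := by
  filter_upwards [ae_lt_top (by fun_prop) (lintegral_enorm_rpow_neg_lt_top hu hu' hμ).ne]
    with x hx hx0
  simp [hx0, hu] at hx

lemma integrable_abs_rpow_neg_of_mellinConvergent_charFun (hu : 0 < u) (hu' : u < 1)
    (hμ : MellinConvergent (charFun μ) u) : Integrable (fun x => |x| ^ (-u)) μ := by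
  refine ⟨Measurable.aestronglyMeasurable (by fun_prop), ?_⟩
  refine lt_of_le_of_lt (lintegral_mono_ae ?_) (lintegral_enorm_rpow_neg_lt_top hu hu' hμ)
  filter_upwards [ae_ne_zero_of_mellinConvergent_charFun hu hu' hμ] with x hx
  rw [Real.enorm_of_nonneg (by positivity), Real.enorm_eq_ofReal_abs,
    ENNReal.ofReal_rpow_of_pos (abs_pos.2 hx)]

lemma tendsto_re_sub_mul_I_cpow_neg {x : ℝ} (hx : x ≠ 0) (u : ℝ) :
    Tendsto (fun ε : ℝ => ((ε - x * Complex.I : ℂ) ^ (-u : ℂ)).re) (𝓝[>] 0)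
      (𝓝 (|x| ^ (-u) * Real.cos (Real.pi / 2 * u))) := by
  have continuousAt_zero :
      ContinuousAt (fun ε : ℝ => ((ε - x * Complex.I : ℂ) ^ (-u : ℂ)).re) 0 := by
    have mem_slitPlane : ((0 : ℝ) - x * Complex.I : ℂ) ∈ Complex.slitPlane :=
      Or.inr (by simpa using hx)
    fun_prop (disch := assumption)
  have value_zero :=
    re_cpow_neg_of_re_eq_zero (z := -(x * Complex.I)) (by simp) (by simpa using hx) u
  simp only [norm_neg, norm_mul, Complex.norm_I, mul_one, Complex.norm_real, Real.norm_eq_abs]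
    at value_zero
  rw [← value_zero]
  simpa using continuousAt_zero.tendsto.mono_left nhdsWithin_le_nhds

lemma Gamma_mul_integral_abs_rpow_neg_mul_cos (hu : 0 < u) (hu' : u < 1)
    (hμ : MellinConvergent (charFun μ) u) :
    Real.Gamma u * ((∫ x, |x| ^ (-u) ∂μ) * Real.cos (Real.pi / 2 * u)) =
      (mellin (charFun μ) u).re := by
  have ae_ne_zero := ae_ne_zero_of_mellinConvergent_charFun hu hu' hμ
  have tendsto_mellin := (Complex.continuous_re.tendsto _).comp (tendsto_mellin_exp_neg_mul_smul hμ)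
  suffices tendsto_integral : Tendsto
      (fun ε : ℝ => ∫ x : ℝ, ((ε - x * Complex.I : ℂ) ^ (-u : ℂ)).re ∂μ) (𝓝[>] 0)
      (𝓝 (∫ x, |x| ^ (-u) * Real.cos (Real.pi / 2 * u) ∂μ)) by
    rw [← integral_mul_const]
    refine tendsto_nhds_unique ((tendsto_integral.const_mul _).congr' ?_) tendsto_mellin
    filter_upwards [self_mem_nhdsWithin] with ε hε
    exact (re_mellin_exp_neg_mul_smul_charFun hu hε).symm
  refine tendsto_integral_filter_of_dominated_convergence (fun x => |x| ^ (-u))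
    (.of_forall fun ε => Measurable.aestronglyMeasurable (by fun_prop)) (.of_forall fun ε => ?_)
    (integrable_abs_rpow_neg_of_mellinConvergent_charFun hu hu' hμ) ?_
  · filter_upwards [ae_ne_zero] with x hx
    calc ‖((ε - x * Complex.I : ℂ) ^ (-u : ℂ)).re‖
        ≤ ‖(ε - x * Complex.I : ℂ) ^ ((-u : ℝ) : ℂ)‖ := by
          rw [Complex.ofReal_neg]
          exact Complex.abs_re_le_norm _
      _ = ‖(ε - x * Complex.I : ℂ)‖ ^ (-u) := Complex.norm_cpow_real _ _
      _ ≤ |x| ^ (-u) := Real.rpow_le_rpow_of_nonpos (abs_pos.2 hx)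
          (by simpa using Complex.abs_im_le_norm (ε - x * Complex.I)) (by linarith)
  · filter_upwards [ae_ne_zero] with x hx
    exact tendsto_re_sub_mul_I_cpow_neg hx u

end NegativeMoments
section SecondOrderExpansion

lemma tendsto_div_sq_of_hasDerivAt {f f' : ℝ → ℝ} {c : ℝ} (hf : ∀ᶠ x in 𝓝 0, HasDerivAt f (f' x) x)
    (hf' : HasDerivAt f' c 0) (hf0 : f 0 = 0) (hf'0 : f' 0 = 0) :
    Tendsto (fun x => f x / x ^ 2) (𝓝[≠] 0) (𝓝 (c / 2)) := by
  have hasDerivAt_sq (x : ℝ) : HasDerivAt (fun x => x ^ 2) (2 * x) x := by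
    simpa using hasDerivAt_pow 2 x
  refine HasDerivAt.lhopital_zero_nhdsNE (hf.filter_mono nhdsWithin_le_nhds)
    (.of_forall hasDerivAt_sq) ?_ ?_ ?_ ?_
  · filter_upwards [self_mem_nhdsWithin] with x hx
    simpa using hx
  · simpa [hf0] using hf.self_of_nhds.continuousAt.tendsto.mono_left nhdsWithin_le_nhds
  · simpa using (hasDerivAt_sq 0).continuousAt.tendsto.mono_left nhdsWithin_le_nhds
  · refine (hf'.tendsto_slope_zero.div_const 2).congr fun x => ?_
    rw [hf'0, zero_add, sub_zero, smul_eq_mul]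
    ring

lemma tendsto_comp_mul_div_sq {f : ℝ → ℝ} {b : ℝ}
    (hf : Tendsto (fun x => f x / x ^ 2) (𝓝[≠] 0) (𝓝 b)) (hf0 : f 0 = 0) (c : ℝ) :
    Tendsto (fun x => f (c * x) / x ^ 2) (𝓝[≠] 0) (𝓝 (b * c ^ 2)) := by
  rcases eq_or_ne c 0 with rfl | hc
  · simp [hf0]
  have tendsto_mul : Tendsto (fun x => c * x) (𝓝[≠] 0) (𝓝[≠] 0) := by
    simpa using (continuous_const_mul c).continuousWithinAt.tendsto_nhdsWithin
      (s := {0}ᶜ) (t := {0}ᶜ) (x := 0) fun x hx => by simpa [hc] using hx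
  refine ((hf.comp tendsto_mul).mul_const (c ^ 2)).congr fun x => ?_
  simp only [Function.comp_apply]
  field_simp

lemma tendsto_exp_sub_one_div {ι : Type*} {l : Filter ι} {f g : ι → ℝ} {b : ℝ}
    (hf : Tendsto f l (𝓝 0)) (hfg : Tendsto (fun i => f i / g i) l (𝓝 b)) :
    Tendsto (fun i => (Real.exp (f i) - 1) / g i) l (𝓝 b) := by
  have tendsto_dslope : Tendsto (fun i => dslope Real.exp 0 (f i)) l (𝓝 1) := by
    simpa [Function.comp_def] using
      (continuousAt_dslope_same.2 Real.differentiableAt_exp).tendsto.comp hf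
  refine (one_mul b ▸ tendsto_dslope.mul hfg).congr fun i => ?_
  rw [← mul_div_assoc, mul_comm (dslope _ _ _)]
  simpa using congrArg (· / g i) (sub_smul_dslope Real.exp 0 (f i))

lemma hasDerivAt_log_cos {x : ℝ} (hx : Real.cos x ≠ 0) :
    HasDerivAt (fun x => Real.log (Real.cos x)) (-Real.tan x) x := by
  convert (Real.hasDerivAt_cos x).log hx using 1
  rw [Real.tan_eq_sin_div_cos, neg_div]

lemma tendsto_log_cos_div_sq :
    Tendsto (fun x => Real.log (Real.cos x) / x ^ 2) (𝓝[≠] 0) (𝓝 (-1 / 2)) := by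
  refine tendsto_div_sq_of_hasDerivAt (f' := fun x => -Real.tan x) ?_ ?_ (by simp) (by simp)
  · filter_upwards [Real.continuous_cos.continuousAt.eventually_ne (by simp : Real.cos 0 ≠ 0)]
      with x hx using hasDerivAt_log_cos hx
  · simpa using (Real.hasDerivAt_tan (x := 0) (by simp)).fun_neg

lemma Gamma_one_add_mul_Gamma_one_sub_mul_cos {u : ℝ} (hu : u ≠ 0) (hu' : |u| < 1) :
    Real.Gamma (1 + u) * Real.Gamma (1 - u) * Real.cos (Real.pi / 2 * u) =
      Real.Gamma (1 + u / 2) * Real.Gamma (1 - u / 2) := by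
  have reflection {v : ℝ} (hv : v ≠ 0) :
      Real.Gamma (1 + v) * Real.Gamma (1 - v) = v * (Real.pi / Real.sin (Real.pi * v)) := by
    rw [add_comm, Real.Gamma_add_one hv, mul_assoc, Real.Gamma_mul_Gamma_one_sub]
  rw [reflection hu, reflection (div_ne_zero hu two_ne_zero),
    show Real.pi * u = 2 * (Real.pi / 2 * u) by ring,
    show Real.pi * (u / 2) = Real.pi / 2 * u by ring, Real.sin_two_mul]
  obtain ⟨hu1, hu2⟩ := abs_lt.1 hu'
  have cos_ne_zero : Real.cos (Real.pi / 2 * u) ≠ 0 :=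
    (Real.cos_pos_of_mem_Ioo ⟨by nlinarith [Real.pi_pos], by nlinarith [Real.pi_pos]⟩).ne'
  rw [mul_assoc, div_mul_eq_mul_div, mul_div_mul_right _ _ cos_ne_zero]
  ring

/-- The function `log Γ(1 + u) + C u`, whose expansion at `0` starts at order two. -/
noncomputable def centeredLogGamma (u : ℝ) : ℝ :=
  Real.log (Real.Gamma (1 + u)) + Real.eulerMascheroniConstant * u

lemma centeredLogGamma_zero : centeredLogGamma 0 = 0 := by
  simp [centeredLogGamma]

lemma hasDerivAt_centeredLogGamma_zero : HasDerivAt centeredLogGamma 0 0 := by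
  have hasDerivAt_Gamma : HasDerivAt (fun u => Real.Gamma (1 + u))
      (-Real.eulerMascheroniConstant) 0 :=
    HasDerivAt.comp_const_add 1 0 (by simpa using Real.hasDerivAt_Gamma_one)
  exact ((hasDerivAt_Gamma.log (by simp)).fun_add
    ((hasDerivAt_id 0).const_mul Real.eulerMascheroniConstant)).congr_deriv (by simp)

lemma analyticAt_Gamma_of_pos {x : ℝ} (hx : 0 < x) : AnalyticAt ℝ Real.Gamma x := by
  have analyticAt_complex : AnalyticAt ℂ Complex.Gamma x := by
    rw [Complex.analyticAt_iff_eventually_differentiableAt]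
    filter_upwards [(Complex.continuous_re.continuousAt (x := (x : ℂ))).eventually_const_lt hx]
      with z hz
    refine Complex.differentiableAt_Gamma z fun m hm => ?_
    have re_eq_neg : z.re = -m := by simp [hm]
    linarith [m.cast_nonneg (α := ℝ)]
  exact analyticAt_complex.re_ofReal

lemma analyticAt_centeredLogGamma_zero : AnalyticAt ℝ centeredLogGamma 0 := by
  have analyticAt_Gamma : AnalyticAt ℝ (fun u => Real.Gamma (1 + u)) 0 :=
    AnalyticAt.comp (g := Real.Gamma) (analyticAt_Gamma_of_pos (by simp)) (by fun_prop)
  exact (analyticAt_Gamma.log (by simp)).add (by fun_prop)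

lemma exists_tendsto_centeredLogGamma_div_sq :
    ∃ q, Tendsto (fun u => centeredLogGamma u / u ^ 2) (𝓝[≠] 0) (𝓝 q) := by
  have analytic := analyticAt_centeredLogGamma_zero
  refine ⟨_, tendsto_div_sq_of_hasDerivAt (f' := deriv centeredLogGamma) ?_
    analytic.deriv.differentiableAt.hasDerivAt centeredLogGamma_zero
    hasDerivAt_centeredLogGamma_zero.deriv⟩
  filter_upwards [analytic.eventually_analyticAt] with u hu
  exact hu.differentiableAt.hasDerivAt

lemma centeredLogGamma_add_neg_add_log_cos {u : ℝ} (hu : u ≠ 0) (hu' : |u| < 1) :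
    centeredLogGamma u + centeredLogGamma (-1 * u) + Real.log (Real.cos (Real.pi / 2 * u)) =
      centeredLogGamma (1 / 2 * u) + centeredLogGamma (-1 / 2 * u) := by
  have := congrArg Real.log (Gamma_one_add_mul_Gamma_one_sub_mul_cos hu hu')
  obtain ⟨hu1, hu2⟩ := abs_lt.1 hu'
  have cos_pos : 0 < Real.cos (Real.pi / 2 * u) :=
    Real.cos_pos_of_mem_Ioo ⟨by nlinarith [Real.pi_pos], by nlinarith [Real.pi_pos]⟩
  have Gamma_ne_zero {v : ℝ} (hv : 0 < v) : Real.Gamma v ≠ 0 := (Real.Gamma_pos_of_pos hv).ne'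
  rw [Real.log_mul (mul_ne_zero (Gamma_ne_zero (by linarith)) (Gamma_ne_zero (by linarith)))
    cos_pos.ne', Real.log_mul (Gamma_ne_zero (by linarith)) (Gamma_ne_zero (by linarith)),
    Real.log_mul (Gamma_ne_zero (by linarith)) (Gamma_ne_zero (by linarith))] at this
  simp only [centeredLogGamma]
  ring_nf at this ⊢
  linarith

lemma tendsto_centeredLogGamma_div_sq :
    Tendsto (fun u => centeredLogGamma u / u ^ 2) (𝓝[≠] 0) (𝓝 (Real.pi ^ 2 / 12)) := by
  obtain ⟨q, hq⟩ := exists_tendsto_centeredLogGamma_div_sq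
  -- The quadratic terms of the reflection identity read `2 q - π² / 8 = q / 2`.
  have scaled := tendsto_comp_mul_div_sq hq centeredLogGamma_zero
  have limit_left := (hq.add (scaled (-1))).add
    (tendsto_comp_mul_div_sq tendsto_log_cos_div_sq (by simp) (Real.pi / 2))
  have limit_right := (scaled (1 / 2)).add (scaled (-1 / 2))
  have limits_eq := tendsto_nhds_unique_of_eventuallyEq limit_left limit_right ?_
  · rwa [show Real.pi ^ 2 / 12 = q by linarith]
  · filter_upwards [self_mem_nhdsWithin,
      nhdsWithin_le_nhds (Metric.ball_mem_nhds (0 : ℝ) one_pos)] with u hu hu'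
    rw [← add_div, ← add_div, ← add_div,
      centeredLogGamma_add_neg_add_log_cos hu (by simpa using hu')]

end SecondOrderExpansion
section OneSidedCumulants

/-- The slope of `u ↦ exp (u * z)` between `0` and `u`, a one-sided approximation of `z`. -/
noncomputable def expSlope (u z : ℝ) : ℝ := (Real.exp (u * z) - 1) / u

@[fun_prop]
lemma continuous_expSlope (u : ℝ) : Continuous (expSlope u) := by
  unfold expSlope
  fun_prop

lemma le_expSlope {u : ℝ} (hu : 0 < u) (z : ℝ) : z ≤ expSlope u z := by
  rw [expSlope, le_div_iff₀ hu]
  linarith [Real.add_one_le_exp (u * z)]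

lemma expSlope_mono {u v : ℝ} (hu : 0 < u) (huv : u ≤ v) (z : ℝ) : expSlope u z ≤ expSlope v z := by
  have convexOn_exp_mul : ConvexOn ℝ univ fun u : ℝ => Real.exp (u * z) :=
    convexOn_exp.comp_linearMap (LinearMap.mulRight ℝ z)
  simpa [expSlope] using convexOn_exp_mul.secant_mono (mem_univ 0) (mem_univ u) (mem_univ v)
    hu.ne' (hu.trans_le huv).ne' huv

lemma abs_expSlope_le {u v : ℝ} (hu : 0 < u) (huv : u ≤ v) (z : ℝ) :
    |expSlope u z| ≤ |z| + |expSlope v z| := by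
  rw [abs_le]
  constructor
  · linarith [le_expSlope hu z, neg_abs_le z, abs_nonneg (expSlope v z)]
  · linarith [expSlope_mono hu huv z, le_abs_self (expSlope v z), abs_nonneg z]

lemma tendsto_expSlope (z : ℝ) : Tendsto (fun u => expSlope u z) (𝓝[>] 0) (𝓝 z) := by
  have hasDerivAt_exp_mul : HasDerivAt (fun u => Real.exp (u * z)) z 0 := by
    simpa using (hasDerivAt_mul_const (x := 0) z).exp
  simpa [expSlope, div_eq_inv_mul] using hasDerivAt_exp_mul.tendsto_slope_zero_right

lemma expSlope_sq (u z : ℝ) :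
    expSlope u z ^ 2 = (Real.exp (2 * u * z) - 2 * Real.exp (u * z) + 1) / u ^ 2 := by
  rw [expSlope, div_pow, mul_assoc, two_mul (u * z), Real.exp_add]
  ring

variable {Ω : Type*} {mΩ : MeasurableSpace Ω} {P : Measure Ω} {X : Ω → ℝ} {u b : ℝ}

lemma integrable_expSlope_sq [IsFiniteMeasure P]
    (hu : Integrable (fun ω => Real.exp (u * X ω)) P)
    (hu₂ : Integrable (fun ω => Real.exp (2 * u * X ω)) P) :
    Integrable (fun ω => expSlope u (X ω) ^ 2) P := by
  simp_rw [expSlope_sq]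
  exact ((hu₂.sub (hu.const_mul 2)).add (integrable_const 1)).div_const _

variable [IsProbabilityMeasure P]

lemma integral_expSlope (hu : Integrable (fun ω => Real.exp (u * X ω)) P) :
    ∫ ω, expSlope u (X ω) ∂P = (mgf X P u - 1) / u := by
  simp [expSlope, integral_div, integral_sub hu, mgf]

lemma integral_expSlope_sq (hu : Integrable (fun ω => Real.exp (u * X ω)) P)
    (hu₂ : Integrable (fun ω => Real.exp (2 * u * X ω)) P) :
    ∫ ω, expSlope u (X ω) ^ 2 ∂P = (mgf X P (2 * u) - 2 * mgf X P u + 1) / u ^ 2 := by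
  simp_rw [expSlope_sq]
  have integrable_sub : Integrable
      (fun ω => Real.exp (2 * u * X ω) - 2 * Real.exp (u * X ω)) P := hu₂.sub (hu.const_mul 2)
  rw [integral_div, integral_add integrable_sub (integrable_const 1),
    integral_sub hu₂ (hu.const_mul 2), integral_const_mul]
  simp [mgf]

lemma tendsto_integral_expSlope_sq
    (hX : ∀ᶠ u in 𝓝[>] 0, Integrable (fun ω => Real.exp (u * X ω)) P)
    (hb : Tendsto (fun u => (mgf X P u - 1) / u ^ 2) (𝓝[>] 0) (𝓝 b)) :
    Tendsto (fun u => ∫ ω, expSlope u (X ω) ^ 2 ∂P) (𝓝[>] 0) (𝓝 (2 * b)) := by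
  have tendsto_two_mul : Tendsto (fun u : ℝ => 2 * u) (𝓝[>] 0) (𝓝[>] 0) :=
    tendsto_iff_comap.2 (comap_mulLeft_nhdsGT_zero two_pos).ge
  have tendsto_second_difference := ((hb.comp tendsto_two_mul).const_mul 4).sub (hb.const_mul 2)
  rw [show 4 * b - 2 * b = 2 * b by ring] at tendsto_second_difference
  refine tendsto_second_difference.congr' ?_
  filter_upwards [hX, eventually_nhdsGT_zero_mul_left two_pos hX, self_mem_nhdsWithin]
    with u hu hu₂ (hu0 : 0 < u)
  rw [integral_expSlope_sq hu hu₂, Function.comp_apply]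
  field_simp
  ring

lemma memLp_two_of_tendsto_mgf (hXm : AEMeasurable X P)
    (hX : ∀ᶠ u in 𝓝[>] 0, Integrable (fun ω => Real.exp (u * X ω)) P)
    (hb : Tendsto (fun u => (mgf X P u - 1) / u ^ 2) (𝓝[>] 0) (𝓝 b)) : MemLp X 2 P := by
  rw [memLp_two_iff_integrable_sq hXm.aestronglyMeasurable]
  refine ⟨(hXm.pow_const 2).aestronglyMeasurable, ?_⟩
  have tendsto_sq (ω : Ω) :
      Tendsto (fun u => ‖expSlope u (X ω) ^ 2‖ₑ) (𝓝[>] 0) (𝓝 ‖X ω ^ 2‖ₑ) :=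
    ((tendsto_expSlope (X ω)).pow 2).enorm
  calc ∫⁻ ω, ‖X ω ^ 2‖ₑ ∂P
      = ∫⁻ ω, liminf (fun u => ‖expSlope u (X ω) ^ 2‖ₑ) (𝓝[>] 0) ∂P := by
        simp_rw [fun ω => (tendsto_sq ω).liminf_eq]
    _ ≤ liminf (fun u => ∫⁻ ω, ‖expSlope u (X ω) ^ 2‖ₑ ∂P) (𝓝[>] 0) :=
        lintegral_liminf_le' fun u => by fun_prop
    _ ≤ ENNReal.ofReal (2 * b) := by
        rw [← (ENNReal.tendsto_ofReal (tendsto_integral_expSlope_sq hX hb)).liminf_eq]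
        refine liminf_le_liminf ?_
        filter_upwards [hX, eventually_nhdsGT_zero_mul_left two_pos hX] with u hu hu₂
        rw [ofReal_integral_eq_lintegral_ofReal (integrable_expSlope_sq hu hu₂)
          (.of_forall fun ω => sq_nonneg _), lintegral_enorm_of_nonneg fun ω => sq_nonneg _]
    _ < ⊤ := ENNReal.ofReal_lt_top

lemma integral_eq_zero_of_tendsto_mgf (hXm : AEMeasurable X P)
    (hX : ∀ᶠ u in 𝓝[>] 0, Integrable (fun ω => Real.exp (u * X ω)) P)
    (hb : Tendsto (fun u => (mgf X P u - 1) / u ^ 2) (𝓝[>] 0) (𝓝 b)) : ∫ ω, X ω ∂P = 0 := by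
  obtain ⟨v, hv, hv0⟩ := (hX.and self_mem_nhdsWithin).exists
  have integrable_bound : Integrable (fun ω => |X ω| + |expSlope v (X ω)|) P :=
    ((memLp_two_of_tendsto_mgf hXm hX hb).integrable one_le_two).abs.add
      ((hv.sub (integrable_const 1)).div_const v).abs
  refine tendsto_nhds_unique (tendsto_integral_filter_of_dominated_convergence _
    (.of_forall fun u => ?_) ?_ integrable_bound (.of_forall fun ω => tendsto_expSlope (X ω))) ?_
  · fun_prop
  · filter_upwards [Ioc_mem_nhdsGT hv0] with u hu using
      .of_forall fun ω => abs_expSlope_le hu.1 hu.2 (X ω)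
  · have tendsto_id_nhdsGT : Tendsto (fun u : ℝ => u) (𝓝[>] 0) (𝓝 0) := nhdsWithin_le_nhds
    refine (zero_mul b ▸ tendsto_id_nhdsGT.mul hb).congr' ?_
    filter_upwards [hX, self_mem_nhdsWithin] with u hu (hu0 : 0 < u)
    rw [integral_expSlope hu]
    field_simp

lemma integral_sq_eq_of_tendsto_mgf (hXm : AEMeasurable X P)
    (hX : ∀ᶠ u in 𝓝[>] 0, Integrable (fun ω => Real.exp (u * X ω)) P)
    (hb : Tendsto (fun u => (mgf X P u - 1) / u ^ 2) (𝓝[>] 0) (𝓝 b)) :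
    ∫ ω, X ω ^ 2 ∂P = 2 * b := by
  obtain ⟨v, hv, hv₂, hv0⟩ := (hX.and
    ((eventually_nhdsGT_zero_mul_left two_pos hX).and self_mem_nhdsWithin)).exists
  have memLp_expSlope : MemLp (fun ω => expSlope v (X ω)) 2 P :=
    (memLp_two_iff_integrable_sq (by fun_prop)).2 (integrable_expSlope_sq hv hv₂)
  have integrable_bound : Integrable (fun ω => (|X ω| + |expSlope v (X ω)|) ^ 2) P :=
    ((memLp_two_of_tendsto_mgf hXm hX hb).abs.add memLp_expSlope.abs).integrable_sq
  refine tendsto_nhds_unique (tendsto_integral_filter_of_dominated_convergence _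
    (.of_forall fun u => ?_) ?_ integrable_bound
    (.of_forall fun ω => (tendsto_expSlope (X ω)).pow 2)) (tendsto_integral_expSlope_sq hX hb)
  · fun_prop
  · filter_upwards [Ioc_mem_nhdsGT hv0] with u hu
    refine .of_forall fun ω => ?_
    rw [norm_pow, Real.norm_eq_abs]
    gcongr
    exact abs_expSlope_le hu.1 hu.2 (X ω)

lemma tendsto_mgf_sub_const {m : ℝ}
    (hX : ∀ᶠ u in 𝓝[>] 0, Integrable (fun ω => Real.exp (u * X ω)) P)
    (hb : Tendsto (fun u => (cgf X P u - m * u) / u ^ 2) (𝓝[>] 0) (𝓝 b)) :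
    Tendsto (fun u => (mgf (fun ω => X ω - m) P u - 1) / u ^ 2) (𝓝[>] 0) (𝓝 b) := by
  have tendsto_sq : Tendsto (fun u : ℝ => u ^ 2) (𝓝[>] 0) (𝓝 0) := by
    simpa using ((continuous_pow 2).tendsto (0 : ℝ)).mono_left nhdsWithin_le_nhds
  have tendsto_cgf : Tendsto (fun u => cgf X P u - m * u) (𝓝[>] 0) (𝓝 0) := by
    refine (mul_zero b ▸ hb.mul tendsto_sq).congr' ?_
    filter_upwards [self_mem_nhdsWithin] with u (hu : 0 < u)
    field_simp
  refine (tendsto_exp_sub_one_div tendsto_cgf hb).congr' ?_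
  filter_upwards [hX] with u hu
  simp_rw [sub_eq_add_neg _ m, mgf_add_const]
  rw [sub_eq_add_neg (cgf X P u), Real.exp_add, exp_cgf hu, mul_neg, mul_comm m]

lemma moments_of_tendsto_cgf {m : ℝ} (hXm : AEMeasurable X P)
    (hX : ∀ᶠ u in 𝓝[>] 0, Integrable (fun ω => Real.exp (u * X ω)) P)
    (hb : Tendsto (fun u => (cgf X P u - m * u) / u ^ 2) (𝓝[>] 0) (𝓝 b)) :
    MemLp X 2 P ∧ P[X] = m ∧ Var[X; P] = 2 * b := by
  have hXm' : AEMeasurable (fun ω => X ω - m) P := hXm.sub_const m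
  have hX' : ∀ᶠ u in 𝓝[>] 0, Integrable (fun ω => Real.exp (u * (X ω - m))) P := by
    filter_upwards [hX] with u hu
    simpa [mul_sub, Real.exp_sub] using hu.div_const (Real.exp (u * m))
  have hb' := tendsto_mgf_sub_const hX hb
  have memLp_X : MemLp X 2 P := by
    simpa [Pi.add_def] using (memLp_two_of_tendsto_mgf hXm' hX' hb').add (memLp_const m)
  have integral_X : P[X] = m := by
    have integral_sub_eq_zero := integral_eq_zero_of_tendsto_mgf hXm' hX' hb'
    rw [integral_sub (memLp_X.integrable one_le_two) (integrable_const m)] at integral_sub_eq_zero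
    simpa [sub_eq_zero] using integral_sub_eq_zero
  refine ⟨memLp_X, integral_X, ?_⟩
  rw [variance_eq_integral hXm, integral_X]
  exact integral_sq_eq_of_tendsto_mgf hXm' hX' hb'

end OneSidedCumulants

section StableLaw

variable {μ : Measure ℝ} {α u : ℝ} {a : ℂ}

lemma mellinConvergent_charFun_of_eqOn_cexp (hu : 0 < u) (hα : 0 < α) (ha : 0 < a.re)
    (hμ : ∀ t > 0, charFun μ t = Complex.exp (-(a * (t ^ α : ℝ)))) :
    MellinConvergent (charFun μ) u := by
  rw [mellinConvergent_ofReal_iff_integrable]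
  refine (mellinConvergent_ofReal_iff_integrable.1
    (mellinConvergent_cexp_neg_mul_rpow hu hα ha)).congr ?_
  filter_upwards [ae_mellinMeasure_pos u] with t ht using (hμ t ht).symm

lemma mellin_charFun_of_eqOn_cexp (hu : 0 < u) (hα : 0 < α) (ha : 0 < a.re)
    (hμ : ∀ t > 0, charFun μ t = Complex.exp (-(a * (t ^ α : ℝ)))) :
    mellin (charFun μ) u = α⁻¹ * (a ^ (-(u / α : ℝ) : ℂ) * Real.Gamma (u / α)) := by
  rw [← mellin_cexp_neg_mul_rpow hu hα ha, mellin_ofReal_eq_integral, mellin_ofReal_eq_integral]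
  refine integral_congr_ae ?_
  filter_upwards [ae_mellinMeasure_pos u] with t ht using hμ t ht

lemma mgf_neg_log_abs (hμ : ∀ᵐ x ∂μ, x ≠ 0) (u : ℝ) :
    mgf (fun x => -Real.log |x|) μ u = ∫ x, |x| ^ (-u) ∂μ := by
  refine integral_congr_ae ?_
  filter_upwards [hμ] with x hx
  rw [Real.rpow_def_of_pos (abs_pos.2 hx)]
  ring_nf

section FiniteMeasure

variable [IsFiniteMeasure μ]

lemma ae_ne_zero_of_charFun_eqOn_cexp (hα : 0 < α) (ha : 0 < a.re)
    (hμ : ∀ t > 0, charFun μ t = Complex.exp (-(a * (t ^ α : ℝ)))) : ∀ᵐ x ∂μ, x ≠ 0 :=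
  ae_ne_zero_of_mellinConvergent_charFun one_half_pos one_half_lt_one
    (mellinConvergent_charFun_of_eqOn_cexp one_half_pos hα ha hμ)

lemma integrable_exp_mul_neg_log_abs_of_charFun_eqOn_cexp (hu : 0 < u) (hu' : u < 1) (hα : 0 < α)
    (ha : 0 < a.re) (hμ : ∀ t > 0, charFun μ t = Complex.exp (-(a * (t ^ α : ℝ)))) :
    Integrable (fun x => Real.exp (u * -Real.log |x|)) μ := by
  refine (integrable_abs_rpow_neg_of_mellinConvergent_charFun hu hu'
    (mellinConvergent_charFun_of_eqOn_cexp hu hα ha hμ)).congr ?_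
  filter_upwards [ae_ne_zero_of_charFun_eqOn_cexp hα ha hμ] with x hx
  rw [Real.rpow_def_of_pos (abs_pos.2 hx)]
  ring_nf

lemma Gamma_one_add_mul_mgf_mul_cos (hu : 0 < u) (hu' : u < 1) (hα : 0 < α) (ha : 0 < a.re)
    (hμ : ∀ t > 0, charFun μ t = Complex.exp (-(a * (t ^ α : ℝ)))) :
    Real.Gamma (1 + u) *
        (mgf (fun x => -Real.log |x|) μ u * Real.cos (Real.pi / 2 * u)) =
      Real.Gamma (1 + u / α) * (‖a‖ ^ (-(u / α)) * Real.cos (|a.arg| * (u / α))) := by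
  have key := Gamma_mul_integral_abs_rpow_neg_mul_cos hu hu'
    (mellinConvergent_charFun_of_eqOn_cexp hu hα ha hμ)
  rw [mellin_charFun_of_eqOn_cexp hu hα ha hμ, Complex.re_ofReal_mul,
    Complex.re_mul_ofReal, re_cpow_neg_ofReal] at key
  rw [mgf_neg_log_abs (ae_ne_zero_of_charFun_eqOn_cexp hα ha hμ), add_comm 1 u,
    add_comm 1 (u / α), Real.Gamma_add_one hu.ne', Real.Gamma_add_one (div_pos hu hα).ne',
    mul_assoc, key]
  ring

end FiniteMeasure

variable [IsProbabilityMeasure μ]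

lemma cgf_neg_log_abs_sub_mul (hu : 0 < u) (hu' : u < 1) (hα : 0 < α) (ha : 0 < a.re)
    (hμ : ∀ t > 0, charFun μ t = Complex.exp (-(a * (t ^ α : ℝ))))
    (hcos : Real.cos (|a.arg| / α * u) ≠ 0) :
    cgf (fun x => -Real.log |x|) μ u - (Real.eulerMascheroniConstant -
        Real.eulerMascheroniConstant / α - Real.log ‖a‖ / α) * u =
      centeredLogGamma (α⁻¹ * u) - centeredLogGamma u + Real.log (Real.cos (|a.arg| / α * u)) -
        Real.log (Real.cos (Real.pi / 2 * u)) := by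
  have norm_pos : 0 < ‖a‖ := norm_pos_iff.2 fun h => by simp [h] at ha
  have cos_pos : 0 < Real.cos (Real.pi / 2 * u) :=
    Real.cos_pos_of_mem_Ioo ⟨by nlinarith [Real.pi_pos], by nlinarith [Real.pi_pos]⟩
  have mgf_positive : 0 < mgf (fun x => -Real.log |x|) μ u :=
    mgf_pos (integrable_exp_mul_neg_log_abs_of_charFun_eqOn_cexp hu hu' hα ha hμ)
  have log_identity := congrArg Real.log (Gamma_one_add_mul_mgf_mul_cos hu hu' hα ha hμ)
  rw [show |a.arg| * (u / α) = |a.arg| / α * u by ring,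
    Real.log_mul (Real.Gamma_pos_of_pos (by positivity)).ne' (mul_pos mgf_positive cos_pos).ne',
    Real.log_mul mgf_positive.ne' cos_pos.ne',
    Real.log_mul (Real.Gamma_pos_of_pos (by positivity)).ne'
      (mul_ne_zero (Real.rpow_pos_of_pos norm_pos _).ne' hcos),
    Real.log_mul (Real.rpow_pos_of_pos norm_pos _).ne' hcos, Real.log_rpow norm_pos] at log_identity
  simp only [centeredLogGamma, cgf]
  rw [← div_eq_inv_mul]
  linear_combination log_identity

lemma tendsto_cgf_neg_log_abs_sub_mul_div_sq (hα : 0 < α) (ha : 0 < a.re)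
    (hμ : ∀ t > 0, charFun μ t = Complex.exp (-(a * (t ^ α : ℝ)))) :
    Tendsto (fun u => (cgf (fun x => -Real.log |x|) μ u - (Real.eulerMascheroniConstant -
        Real.eulerMascheroniConstant / α - Real.log ‖a‖ / α) * u) / u ^ 2) (𝓝[>] 0)
      (𝓝 (Real.pi ^ 2 / 12 * α⁻¹ ^ 2 - Real.pi ^ 2 / 12 + -1 / 2 * (|a.arg| / α) ^ 2 -
        -1 / 2 * (Real.pi / 2) ^ 2)) := by
  have tendsto_log_cos (c : ℝ) := tendsto_comp_mul_div_sq tendsto_log_cos_div_sq (by simp) c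
  have tendsto_logs := (((tendsto_comp_mul_div_sq tendsto_centeredLogGamma_div_sq
    centeredLogGamma_zero α⁻¹).sub tendsto_centeredLogGamma_div_sq).add
    (tendsto_log_cos (|a.arg| / α))).sub (tendsto_log_cos (Real.pi / 2))
  refine (tendsto_logs.mono_left (nhdsGT_le_nhdsNE 0)).congr' ?_
  have eventually_cos_ne_zero : ∀ᶠ u in 𝓝 0, Real.cos (|a.arg| / α * u) ≠ 0 :=
    ContinuousAt.eventually_ne (by fun_prop) (by simp)
  filter_upwards [Ioo_mem_nhdsGT one_pos, nhdsWithin_le_nhds eventually_cos_ne_zero]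
    with u hu hcos
  rw [cgf_neg_log_abs_sub_mul hu.1 hu.2 hα ha hμ hcos]
  ring

theorem moments_log_abs_of_charFun_eqOn_cexp (hα : 0 < α) (ha : 0 < a.re)
    (hμ : ∀ t > 0, charFun μ t = Complex.exp (-(a * (t ^ α : ℝ)))) :
    MemLp (fun x => Real.log |x|) 2 μ ∧
    ∫ x, Real.log |x| ∂μ = Real.eulerMascheroniConstant * (α⁻¹ - 1) + Real.log ‖a‖ / α ∧
    Var[fun x => Real.log |x|; μ] =
      Real.pi ^ 2 / 6 * (α⁻¹ ^ 2 - 1) + Real.pi ^ 2 / 4 - (a.arg / α) ^ 2 := by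
  have eventually_integrable :
      ∀ᶠ u in 𝓝[>] 0, Integrable (fun x => Real.exp (u * -Real.log |x|)) μ := by
    filter_upwards [Ioo_mem_nhdsGT one_pos] with u hu using
      integrable_exp_mul_neg_log_abs_of_charFun_eqOn_cexp hu.1 hu.2 hα ha hμ
  obtain ⟨memLp_neg, mean_neg, variance_neg⟩ := moments_of_tendsto_cgf
    (Measurable.aemeasurable (by fun_prop)) eventually_integrable
    (tendsto_cgf_neg_log_abs_sub_mul_div_sq hα ha hμ)
  refine ⟨by simpa [Pi.neg_def] using memLp_neg.neg, ?_, ?_⟩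
  · rw [integral_neg] at mean_neg
    linear_combination -mean_neg
  · rw [variance_fun_neg] at variance_neg
    rw [variance_neg, div_pow, div_pow, sq_abs]
    ring

end StableLaw

section Parameters

variable {μ : Measure ℝ} [IsProbabilityMeasure μ] {ν θ τ : ℝ}

/-- The coefficient of `-k ^ (√ν)⁻¹` in the logarithm of the characteristic function, at `k > 0`,
of the strictly stable law with parameters `(ν, θ, τ)`, whose stability index is `(√ν)⁻¹`. -/
noncomputable def stableCoeff (ν θ τ : ℝ) : ℂ :=
  Complex.exp (((√ν)⁻¹ * τ + Real.eulerMascheroniConstant * ((√ν)⁻¹ - 1) : ℝ) +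
    (-(Real.pi / 2 * (θ / √ν)) : ℝ) * Complex.I)

lemma log_norm_stableCoeff (ν θ τ : ℝ) : Real.log ‖stableCoeff ν θ τ‖ =
    (√ν)⁻¹ * τ + Real.eulerMascheroniConstant * ((√ν)⁻¹ - 1) := by
  rw [stableCoeff, Complex.norm_exp, Real.log_exp]
  simp

lemma abs_pi_div_two_mul_div_sqrt_lt (hθ : |θ| < √ν) :
    |-(Real.pi / 2 * (θ / √ν))| < Real.pi / 2 := by
  rw [abs_neg, abs_mul, abs_div θ, abs_of_nonneg (Real.sqrt_nonneg ν),
    abs_of_pos Real.pi_div_two_pos]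
  exact mul_lt_of_lt_one_right Real.pi_div_two_pos
    ((div_lt_one ((abs_nonneg θ).trans_lt hθ)).2 hθ)

lemma arg_stableCoeff (hθ : |θ| < √ν) (τ : ℝ) :
    (stableCoeff ν θ τ).arg = -(Real.pi / 2 * (θ / √ν)) := by
  have bounds := abs_lt.1 (abs_pi_div_two_mul_div_sqrt_lt hθ)
  rw [stableCoeff, Complex.exp_add, ← Complex.ofReal_exp, Complex.arg_real_mul _ (Real.exp_pos _),
    Complex.arg_exp_mul_I, toIocMod_eq_self]
  constructor <;> linarith

lemma re_stableCoeff_pos (hθ : |θ| < √ν) (τ : ℝ) : 0 < (stableCoeff ν θ τ).re := by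
  have abs_arg_lt := abs_pi_div_two_mul_div_sqrt_lt hθ
  rw [← arg_stableCoeff hθ τ, Complex.abs_arg_lt_pi_div_two_iff] at abs_arg_lt
  exact abs_arg_lt.resolve_right (Complex.exp_ne_zero _)

lemma stableCoeff_mul_rpow {k : ℝ} (hν : 0 ≤ ν) (hk : 0 < k) (θ τ : ℝ) :
    stableCoeff ν θ τ * (k ^ (√ν)⁻¹ : ℝ) =
      Complex.exp (((ν ^ (-(1/2) : ℝ) : ℝ) : ℂ) *
            (((Real.log k : ℝ) : ℂ) + (τ : ℂ) -
              Complex.I * ((Real.pi / 2 : ℝ) : ℂ) * (θ : ℂ)) +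
          ((Real.eulerMascheroniConstant : ℝ) : ℂ) * (((ν ^ (-(1/2) : ℝ) : ℝ) : ℂ) - 1)) := by
  rw [Real.rpow_neg hν, ← Real.sqrt_eq_rpow, stableCoeff, Real.rpow_def_of_pos hk,
    Complex.ofReal_exp, ← Complex.exp_add]
  push_cast
  ring_nf

lemma eq_dirac_of_charFun_eqOn_cexp {c : ℝ}
    (hμ : ∀ t > 0, charFun μ t = Complex.exp (t * c * Complex.I)) : μ = Measure.dirac c := by
  have charFun_dirac_eq (t : ℝ) :
      charFun (Measure.dirac c) t = Complex.exp (t * c * Complex.I) := by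
    simp [charFun_dirac, mul_comm]
  refine Measure.ext_of_charFun (funext fun t => ?_)
  rcases lt_trichotomy t 0 with ht | rfl | ht
  · rw [← neg_neg t, charFun_neg, hμ _ (neg_pos.2 ht), charFun_neg, charFun_dirac_eq]
  · simp
  · rw [hμ t ht, charFun_dirac_eq]

theorem moments_log_abs_of_abs_lt_sqrt (hθ : |θ| < √ν)
    (hμ : ∀ t > 0, charFun μ t = Complex.exp (-(stableCoeff ν θ τ * (t ^ (√ν)⁻¹ : ℝ)))) :
    (∀ᵐ x ∂μ, x ≠ 0) ∧ MemLp (fun x => Real.log |x|) 2 μ ∧ ∫ x, Real.log |x| ∂μ = τ ∧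
    Var[fun x => Real.log |x|; μ] = Real.pi ^ 2 / 4 * (1 - θ ^ 2) + Real.pi ^ 2 / 6 * (ν - 1) := by
  have sqrt_pos : 0 < √ν := (abs_nonneg θ).trans_lt hθ
  obtain ⟨memLp_log, mean_log, variance_log⟩ := moments_log_abs_of_charFun_eqOn_cexp
    (inv_pos.2 sqrt_pos) (re_stableCoeff_pos hθ τ) hμ
  refine ⟨ae_ne_zero_of_charFun_eqOn_cexp (inv_pos.2 sqrt_pos) (re_stableCoeff_pos hθ τ) hμ,
    memLp_log, ?_, ?_⟩
  · rw [mean_log, log_norm_stableCoeff]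
    field_simp
    ring
  · rw [variance_log, arg_stableCoeff hθ, inv_inv, Real.sq_sqrt (Real.sqrt_pos.1 sqrt_pos).le]
    field_simp
    ring

theorem moments_log_abs_of_sqrt_eq_one (hν : √ν = 1) (hθ : |θ| = 1)
    (hμ : ∀ t > 0, charFun μ t = Complex.exp (-(stableCoeff ν θ τ * (t ^ (√ν)⁻¹ : ℝ)))) :
    (∀ᵐ x ∂μ, x ≠ 0) ∧ MemLp (fun x => Real.log |x|) 2 μ ∧ ∫ x, Real.log |x| ∂μ = τ ∧
    Var[fun x => Real.log |x|; μ] = Real.pi ^ 2 / 4 * (1 - θ ^ 2) + Real.pi ^ 2 / 6 * (ν - 1) := by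
  -- A purely imaginary coefficient with stability index one is a point mass.
  have coeff_eq : stableCoeff ν θ τ = -((θ * Real.exp τ : ℝ) * Complex.I) := by
    rcases abs_eq_abs.1 (hθ.trans abs_one.symm) with rfl | rfl <;>
      simp [stableCoeff, hν, Complex.exp_add, Complex.exp_neg, Complex.exp_pi_div_two_mul_I]
  have log_abs_eq : Real.log |θ * Real.exp τ| = τ := by
    rw [abs_mul, hθ, one_mul, Real.abs_exp, Real.log_exp]
  have dirac_eq : μ = Measure.dirac (θ * Real.exp τ) := by
    refine eq_dirac_of_charFun_eqOn_cexp fun t ht => ?_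
    rw [hμ t ht, coeff_eq, hν, inv_one, Real.rpow_one]
    ring_nf
  have theta_sq : θ ^ 2 = 1 := by rw [← sq_abs, hθ, one_pow]
  have atom_ne_zero : θ * Real.exp τ ≠ 0 :=
    mul_ne_zero (abs_pos.1 (hθ ▸ one_pos)) (Real.exp_ne_zero τ)
  rw [dirac_eq]
  refine ⟨?_, ?_, ?_, ?_⟩
  · rwa [ae_dirac_eq]
  · refine (memLp_const τ).ae_eq ?_
    rw [ae_dirac_eq]
    exact log_abs_eq.symm
  · rw [integral_dirac, log_abs_eq]
  · rw [variance_dirac, theta_sq, Real.sqrt_eq_one.1 hν]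
    ring

theorem moments_log_abs_of_charFun_stable (hθ : |θ| ≤ min 1 (2 * √ν - 1))
    (hμ : ∀ t > 0, charFun μ t = Complex.exp (-(stableCoeff ν θ τ * (t ^ (√ν)⁻¹ : ℝ)))) :
    (∀ᵐ x ∂μ, x ≠ 0) ∧ MemLp (fun x => Real.log |x|) 2 μ ∧ ∫ x, Real.log |x| ∂μ = τ ∧
    Var[fun x => Real.log |x|; μ] = Real.pi ^ 2 / 4 * (1 - θ ^ 2) + Real.pi ^ 2 / 6 * (ν - 1) := by
  obtain ⟨abs_le_one, abs_le_two_mul⟩ := le_min_iff.1 hθ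
  rcases lt_or_ge |θ| √ν with abs_lt_sqrt | sqrt_le_abs
  · exact moments_log_abs_of_abs_lt_sqrt abs_lt_sqrt hμ
  · exact moments_log_abs_of_sqrt_eq_one (by linarith) (by linarith) hμ

end Parameters

theorem second_log_moment_of_strictlyStable_general {Ω : Type*} {mΩ : MeasurableSpace Ω}
    {P : Measure Ω} [IsProbabilityMeasure P] {X : Ω → ℝ} {ν θ τ : ℝ} (hXm : AEMeasurable X P)
    (hθ : |θ| ≤ min 1 (2 * √ν - 1))
    (hX : ∀ k : ℝ, 0 < k →
      ∫ ω, Complex.exp (Complex.I * (k : ℂ) * (X ω : ℂ)) ∂P =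
        Complex.exp (-Complex.exp
          (((ν ^ (-(1/2) : ℝ) : ℝ) : ℂ) *
              (((Real.log k : ℝ) : ℂ) + (τ : ℂ) -
                Complex.I * ((Real.pi / 2 : ℝ) : ℂ) * (θ : ℂ)) +
            ((Real.eulerMascheroniConstant : ℝ) : ℂ) * (((ν ^ (-(1/2) : ℝ) : ℝ) : ℂ) - 1)))) :
    (∀ᵐ ω ∂P, X ω ≠ 0) ∧ MemLp (fun ω => Real.log |X ω|) 2 P ∧
    ∫ ω, Real.log |X ω| ∂P = τ ∧
    ∫ ω, Real.log |X ω| ^ 2 ∂P =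
      τ ^ 2 + (Real.pi ^ 2 / 4 * (1 - θ ^ 2) + Real.pi ^ 2 / 6 * (ν - 1)) ∧
    ∫ ω, (Real.log |X ω| - τ) ^ 2 ∂P =
      Real.pi ^ 2 / 4 * (1 - θ ^ 2) + Real.pi ^ 2 / 6 * (ν - 1) := by
  have sqrt_pos : 0 < √ν := by linarith [abs_nonneg θ, (le_min_iff.1 hθ).2]
  have : IsProbabilityMeasure (P.map X) := Measure.isProbabilityMeasure_map hXm
  have log_abs_measurable : Measurable fun x : ℝ => Real.log |x| := by fun_prop
  have charFun_map (k : ℝ) (hk : 0 < k) :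
      charFun (P.map X) k = Complex.exp (-(stableCoeff ν θ τ * (k ^ (√ν)⁻¹ : ℝ))) := by
    rw [stableCoeff_mul_rpow (Real.sqrt_pos.1 sqrt_pos).le hk, ← hX k hk, charFun_apply_real,
      integral_map hXm (by fun_prop)]
    simp_rw [mul_comm Complex.I, mul_right_comm]
  obtain ⟨ae_ne_zero, memLp_log, mean_log, variance_log⟩ :=
    moments_log_abs_of_charFun_stable hθ charFun_map
  rw [memLp_map_measure_iff log_abs_measurable.aestronglyMeasurable hXm] at memLp_log
  rw [integral_map hXm log_abs_measurable.aestronglyMeasurable] at mean_log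
  rw [variance_map log_abs_measurable.aemeasurable hXm] at variance_log
  have variance_eq_sq_sub := variance_eq_sub memLp_log
  simp only [Function.comp_def, Pi.pow_apply] at memLp_log variance_log variance_eq_sq_sub
  refine ⟨ae_of_ae_map hXm ae_ne_zero, memLp_log, mean_log, ?_, ?_⟩
  · rw [mean_log] at variance_eq_sq_sub
    linarith
  · rw [← variance_log, variance_eq_integral memLp_log.aemeasurable, mean_log]

theorem second_log_moment_of_strictlyStable {Ω : Type*} [MeasureSpace Ω]
    [IsProbabilityMeasure (ℙ : Measure Ω)] (X : Ω → ℝ) (ν θ τ : ℝ)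
    (hX : IsStrictlyStable X ν θ τ)
    (DV : ℝ) (hDV : DV = Real.pi ^ 2 / 4 * (1 - θ ^ 2) + Real.pi ^ 2 / 6 * (ν - 1)) :
    (∫ ω, (Real.log |X ω|) ^ 2) = τ ^ 2 + DV ∧
    (∫ ω, (Real.log |X ω| - τ) ^ 2) = DV := by
  subst hDV
  obtain ⟨hXm, -, hθ, -, -, hchar⟩ := hX
  exact (second_log_moment_of_strictlyStable_general hXm.aemeasurable hθ fun k hk => by
    simpa [abs_of_pos hk, Real.sign_of_pos hk] using hchar k hk.ne').2.2.2
end
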